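/- Let n be a positive integer congruent to 2 modulo 4. Then the complex dimension of the diagonal coinvariant ring R_W of the Weyl group W(B_n) satisfies dim_ℂ R_W ≥ (2n+1)^n + n(n-6)/4 (note n(n-6) is divisible by 4 when n ≡ 2 mod 4). -/

import Mathlib

open MvPolynomial

/-- The action of the signed permutation `(ε, σ) ∈ W(Bₙ)` on the polynomial ring
`ℂ[x₁,…,xₙ,y₁,…,yₙ]`, sending `xᵢ ↦ εᵢ x_{σ(i)}` and `yᵢ ↦ εᵢ y_{σ(i)}`. -/
noncomputable def bAct (n : ℕ) (ε : Fin n → ℤˣ) (σ : Equiv.Perm (Fin n)) :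
    MvPolynomial (Fin n ⊕ Fin n) ℂ →ₐ[ℂ] MvPolynomial (Fin n ⊕ Fin n) ℂ :=
  aeval (Sum.elim
    (fun i => (((ε i : ℤ) : ℂ)) • X (Sum.inl (σ i)))
    (fun i => (((ε i : ℤ) : ℂ)) • X (Sum.inr (σ i))))

/-- The ideal `I_W` generated by the `W(Bₙ)`-invariant polynomials of positive degree
(equivalently, by the invariant polynomials with zero constant term). -/
noncomputable def diagIdeal (n : ℕ) : Ideal (MvPolynomial (Fin n ⊕ Fin n) ℂ) :=
  Ideal.span {f | (∀ ε σ, bAct n ε σ f = f) ∧ constantCoeff f = 0}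

namespace DC
section abstr
variable {K A M : Type*} [Field K] [AddCommGroup A] [Module K A] [AddCommGroup M] [Module K M]

/-- Partial sums of a family of subspaces. -/
def low (B : ℕ → Submodule K A) : ℕ → Submodule K A
  | 0 => ⊥
  | m + 1 => low B m ⊔ B m

/-- Elements of the `m`-th piece whose image is already hit in lower degree. -/
def lead (B : ℕ → Submodule K A) (φ : A →ₗ[K] M) (m : ℕ) : Submodule K A :=
  B m ⊓ ((low B m).map φ).comap φ

lemma low_mono {B C : ℕ → Submodule K A} (h : ∀ m, C m ≤ B m) (L : ℕ) : low C L ≤ low B L := by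
  induction L with
  | zero => exact le_rfl
  | succ L ih => exact sup_le_sup ih (h L)

lemma low_fin (B : ℕ → Submodule K A) [∀ m, FiniteDimensional K (B m)] (L : ℕ) :
    FiniteDimensional K (low B L) := by
  induction L with
  | zero => exact inferInstanceAs (FiniteDimensional K (⊥ : Submodule K A))
  | succ L ih => exact Submodule.finiteDimensional_sup _ _

lemma finrank_map_add (p : Submodule K A) [FiniteDimensional K p] (φ : A →ₗ[K] M) :
    Module.finrank K (p.map φ) + Module.finrank K (p ⊓ LinearMap.ker φ : Submodule K A)
      = Module.finrank K p := by
  have h := LinearMap.finrank_range_add_finrank_ker (φ.domRestrict p)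
  rw [LinearMap.range_domRestrict] at h
  rw [← h]
  congr 1
  rw [LinearMap.ker_domRestrict]
  rw [← Submodule.finrank_map_subtype_eq, Submodule.map_comap_subtype]

lemma rank_low (B : ℕ → Submodule K A) [∀ m, FiniteDimensional K (B m)] (φ : A →ₗ[K] M) (L : ℕ) :
    Module.finrank K ((low B L).map φ) + ∑ m ∈ Finset.range L, Module.finrank K (lead B φ m)
      = ∑ m ∈ Finset.range L, Module.finrank K (B m) := by
  induction L with
  | zero =>
    have h : (low B 0).map φ = ⊥ := Submodule.map_bot φ
    rw [h]; simp
  | succ L ih =>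
    rw [Finset.sum_range_succ, Finset.sum_range_succ, ← ih]
    have := low_fin B L
    have e0 : (low B (L+1)).map φ = (low B L).map φ ⊔ (B L).map φ := by
      simp [low, Submodule.map_sup]
    have h1 := Submodule.finrank_sup_add_finrank_inf_eq ((low B L).map φ) ((B L).map φ)
    rw [← e0] at h1
    have h2 := finrank_map_add (B L) φ
    have : FiniteDimensional K (lead B φ L) := Submodule.finiteDimensional_of_le inf_le_left
    have h3 := finrank_map_add (lead B φ L) φ
    have e1 : lead B φ L ⊓ LinearMap.ker φ = B L ⊓ LinearMap.ker φ := by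
      ext x
      simp only [lead, Submodule.mem_inf, LinearMap.mem_ker, Submodule.mem_comap]
      constructor
      · rintro ⟨⟨a, b⟩, c⟩; exact ⟨a, c⟩
      · rintro ⟨a, c⟩; refine ⟨⟨a, ?_⟩, c⟩; rw [c]; exact Submodule.zero_mem _
    have e2 : (lead B φ L).map φ = (low B L).map φ ⊓ (B L).map φ := by
      ext y
      simp only [lead, Submodule.mem_map, Submodule.mem_inf, Submodule.mem_comap]
      constructor
      · rintro ⟨x, ⟨hx, h⟩, rfl⟩; exact ⟨h, x, hx, rfl⟩
      · rintro ⟨h, x, hx, rfl⟩; exact ⟨x, ⟨hx, h⟩, rfl⟩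
    rw [e1, e2] at h3
    omega

lemma count_aux (B C : ℕ → Submodule K A) [∀ m, FiniteDimensional K (B m)]
    {M₂ : Type*} [AddCommGroup M₂] [Module K M₂]
    (φ₁ : A →ₗ[K] M) (φ₂ : A →ₗ[K] M₂) (hCB : ∀ m, C m ≤ B m)
    (hC : ∀ m, C m ⊓ lead B φ₂ m ≤ lead C φ₂ m) (L : ℕ) :
    Module.finrank K ((low B L).map φ₁) + Module.finrank K ((low C L).map φ₂) +
      ∑ m ∈ Finset.range L, Module.finrank K (lead B φ₁ m ⊓ lead B φ₂ m : Submodule K A)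
      ≤ ∑ m ∈ Finset.range L, Module.finrank K (B m) + Module.finrank K ((low C L).map φ₁) := by
  have : ∀ m, FiniteDimensional K (C m) := fun m => Submodule.finiteDimensional_of_le (hCB m)
  have r1 := rank_low B φ₁ L
  have r2 := rank_low C φ₂ L
  have r3 := rank_low C φ₁ L
  have key : ∀ m, Module.finrank K (lead C φ₁ m) +
      Module.finrank K (lead B φ₁ m ⊓ lead B φ₂ m : Submodule K A) ≤
      Module.finrank K (lead B φ₁ m) + Module.finrank K (lead C φ₂ m) := by
    intro m
    have i1 : FiniteDimensional K (lead B φ₁ m) := Submodule.finiteDimensional_of_le inf_le_left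
    have i2 : FiniteDimensional K (lead B φ₂ m) := Submodule.finiteDimensional_of_le inf_le_left
    have i3 : FiniteDimensional K (lead C φ₁ m) := Submodule.finiteDimensional_of_le inf_le_left
    have i4 : FiniteDimensional K (lead C φ₂ m) := Submodule.finiteDimensional_of_le inf_le_left
    have h1 := Submodule.finrank_sup_add_finrank_inf_eq (lead C φ₁ m) (lead B φ₁ m ⊓ lead B φ₂ m)
    have a1 : lead C φ₁ m ≤ lead B φ₁ m := by
      refine inf_le_inf (hCB m) (Submodule.comap_mono (Submodule.map_mono (low_mono hCB m)))
    have h2 : Module.finrank K (lead C φ₁ m ⊔ (lead B φ₁ m ⊓ lead B φ₂ m) : Submodule K A) ≤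
        Module.finrank K (lead B φ₁ m) := Submodule.finrank_mono (sup_le a1 inf_le_left)
    have h3 : Module.finrank K (lead C φ₁ m ⊓ (lead B φ₁ m ⊓ lead B φ₂ m) : Submodule K A) ≤
        Module.finrank K (lead C φ₂ m) := by
      refine Submodule.finrank_mono (le_trans ?_ (hC m))
      refine le_inf (inf_le_left.trans inf_le_left) (inf_le_right.trans inf_le_right)
    omega
  have ks := Finset.sum_le_sum (fun m (_ : m ∈ Finset.range L) => key m)
  rw [Finset.sum_add_distrib, Finset.sum_add_distrib] at ks
  omega
lemma quot_bound_aux (H : ℕ → Submodule K A) [∀ m, FiniteDimensional K (H m)]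
    (pr : ℕ → A →ₗ[K] A) (pr_mem : ∀ m a, pr m a ∈ H m) (pr_self : ∀ m, ∀ a ∈ H m, pr m a = a)
    (pr_ne : ∀ m m', m' ≠ m → ∀ a ∈ H m', pr m a = 0)
    (I : Submodule K A) [FiniteDimensional K (A ⧸ I)]
    (J : ℕ → Submodule K A) (hJ : ∀ m, J m ≤ H m)
    (hI : ∀ f ∈ I, ∀ m, pr m f ∈ J m) (L : ℕ) :
    ∑ m ∈ Finset.range L, Module.finrank K (H m) ≤
      Module.finrank K (A ⧸ I) + ∑ m ∈ Finset.range L, Module.finrank K (J m) := by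
  let Q : Fin L → Type _ := fun m => H m ⧸ ((J m).comap (H m).subtype)
  let hc : ∀ m : ℕ, A →ₗ[K] H m := fun m => (pr m).codRestrict (H m) (pr_mem m)
  let F : A →ₗ[K] (∀ m, Q m) := LinearMap.pi (fun m => (Submodule.mkQ _).comp (hc m))
  have hsurj : Function.Surjective F := by
    intro q
    choose r hr using fun m => Submodule.mkQ_surjective _ (q m)
    refine ⟨∑ m, (r m : A), ?_⟩
    funext m
    rw [← hr m]
    change Submodule.mkQ _ (hc m _) = _
    congr 1
    apply Subtype.ext
    change pr m (∑ m, (r m : A)) = _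
    rw [map_sum, Finset.sum_eq_single m]
    · exact pr_self _ _ (r m).2
    · intro b _ hb
      exact pr_ne _ _ (fun h => hb (Fin.ext h)) _ (r b).2
    · simp
  have hker : I ≤ LinearMap.ker F := by
    intro f hf
    rw [LinearMap.mem_ker]
    funext m
    change Submodule.mkQ _ (hc m f) = 0
    rw [Submodule.mkQ_apply, Submodule.Quotient.mk_eq_zero]
    exact hI f hf m
  let G : (A ⧸ I) →ₗ[K] (∀ m, Q m) := I.liftQ F hker
  have hG : Function.Surjective G := by
    intro q
    obtain ⟨f, rfl⟩ := hsurj q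
    exact ⟨Submodule.Quotient.mk f, rfl⟩
  have h1 := LinearMap.finrank_le_finrank_of_surjective (f := G) hG
  rw [Module.finrank_pi_fintype] at h1
  have h2 : ∀ m : Fin L, Module.finrank K (H m) = Module.finrank K (Q m) +
      Module.finrank K (J m) := by
    intro m
    rw [← Submodule.finrank_quotient_add_finrank ((J m).comap (H m).subtype)]
    congr 1
    rw [← Submodule.finrank_map_subtype_eq, Submodule.map_comap_subtype, inf_eq_right.mpr (hJ m)]
  rw [Finset.sum_range, Finset.sum_range, Finset.sum_congr rfl (fun m _ => h2 m),
    Finset.sum_add_distrib]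
  omega
end abstr

section poly
variable {σ : Type*} [Finite σ]

instance homog_fin (m : ℕ) : FiniteDimensional ℂ (homogeneousSubmodule σ ℂ m) := by
  have h : homogeneousSubmodule σ ℂ m ≤ restrictTotalDegree σ ℂ m := by
    intro p hp
    rw [mem_restrictTotalDegree]
    exact IsHomogeneous.totalDegree_le hp
  exact Submodule.finiteDimensional_of_le h

lemma quot_bound (I : Ideal (MvPolynomial σ ℂ)) [FiniteDimensional ℂ (MvPolynomial σ ℂ ⧸ I)]
    (J : ℕ → Submodule ℂ (MvPolynomial σ ℂ)) (hJ : ∀ m, J m ≤ homogeneousSubmodule σ ℂ m)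
    (hI : ∀ f ∈ I, ∀ m, homogeneousComponent m f ∈ J m) (L : ℕ) :
    ∑ m ∈ Finset.range L, Module.finrank ℂ (homogeneousSubmodule σ ℂ m) ≤
      Module.finrank ℂ (MvPolynomial σ ℂ ⧸ I) +
      ∑ m ∈ Finset.range L, Module.finrank ℂ (J m) := by
  have : FiniteDimensional ℂ (MvPolynomial σ ℂ ⧸ I.restrictScalars ℂ) :=
    inferInstanceAs (FiniteDimensional ℂ (MvPolynomial σ ℂ ⧸ I))
  exact quot_bound_aux (homogeneousSubmodule σ ℂ) homogeneousComponent
    (fun m a => homogeneousComponent_mem m a)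
    (fun m a ha => by rw [homogeneousComponent_of_mem ha, if_pos rfl])
    (fun m m' hm a ha => by rw [homogeneousComponent_of_mem ha, if_neg hm.symm])
    (I.restrictScalars ℂ) J hJ hI L
end poly
end DC

namespace DC
section mats
variable {n N : ℕ}

/-- Kronecker product of matrices, one for each site. -/
def kron (A : Fin n → Matrix (Fin N) (Fin N) ℂ) :
    Matrix (Fin n → Fin N) (Fin n → Fin N) ℂ :=
  Matrix.of fun e e' => ∏ i, A i (e i) (e' i)

lemma kron_apply (A : Fin n → Matrix (Fin N) (Fin N) ℂ) (e e') :
    kron A e e' = ∏ i, A i (e i) (e' i) := rfl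

lemma kron_mul (A B : Fin n → Matrix (Fin N) (Fin N) ℂ) : kron A * kron B = kron (A * B) := by
  ext e e'
  rw [Matrix.mul_apply, kron_apply]
  simp only [kron_apply, Pi.mul_apply, Matrix.mul_apply]
  rw [Finset.prod_univ_sum]
  simp [Finset.prod_mul_distrib, Fintype.piFinset_univ]

lemma kron_sum {ι : Type*} (s : Finset ι) (c : Fin n → ι → ℂ)
    (B : Fin n → ι → Matrix (Fin N) (Fin N) ℂ) :
    kron (fun i => ∑ a ∈ s, c i a • B i a) =
      ∑ f ∈ Fintype.piFinset (fun _ : Fin n => s), (∏ i, c i (f i)) • kron (fun i => B i (f i)) := by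
  ext e e'
  rw [kron_apply, Matrix.sum_apply]
  simp only [Matrix.sum_apply, Matrix.smul_apply, kron_apply, smul_eq_mul]
  rw [Finset.prod_univ_sum]
  simp [Finset.prod_mul_distrib]

lemma kron_update_add (A : Fin n → Matrix (Fin N) (Fin N) ℂ) (i : Fin n) (B C) :
    kron (Function.update A i (B + C)) =
      kron (Function.update A i B) + kron (Function.update A i C) := by
  ext e e'
  have h : ∀ T, kron (Function.update A i T) e e' = T (e i) (e' i) *
      ∏ j ∈ Finset.univ.erase i, A j (e j) (e' j) := by
    intro T
    rw [kron_apply, ← Finset.mul_prod_erase _ _ (Finset.mem_univ i)]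
    congr 1
    · simp
    · refine Finset.prod_congr rfl (fun j hj => ?_)
      rw [Function.update_of_ne (Finset.ne_of_mem_erase hj)]
  rw [Matrix.add_apply, h, h, h, Matrix.add_apply, add_mul]

lemma kron_update_smul (A : Fin n → Matrix (Fin N) (Fin N) ℂ) (i : Fin n) (c : ℂ) (B) :
    kron (Function.update A i (c • B)) = c • kron (Function.update A i B) := by
  ext e e'
  have h : ∀ T, kron (Function.update A i T) e e' = T (e i) (e' i) *
      ∏ j ∈ Finset.univ.erase i, A j (e j) (e' j) := by
    intro T
    rw [kron_apply, ← Finset.mul_prod_erase _ _ (Finset.mem_univ i)]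
    congr 1
    · simp
    · refine Finset.prod_congr rfl (fun j hj => ?_)
      rw [Function.update_of_ne (Finset.ne_of_mem_erase hj)]
  rw [Matrix.smul_apply, h, h, Matrix.smul_apply, smul_mul_assoc]

/-- multiplication by `x` on `ℂ[x]/x^N`. -/
def Xm (N : ℕ) : Matrix (Fin N) (Fin N) ℂ :=
  Matrix.of fun i j => if (i : ℕ) = j + 1 then 1 else 0

/-- coefficients of the Dunkl operator. -/
def dco (N j : ℕ) : ℂ := if Even j then (j : ℂ) else (j : ℂ) - N

/-- The Dunkl operator. -/
def Dm (N : ℕ) : Matrix (Fin N) (Fin N) ℂ :=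
  Matrix.of fun i j => if (j : ℕ) = i + 1 then dco N j else 0

/-- The sign change. -/
def Sm (N : ℕ) : Matrix (Fin N) (Fin N) ℂ := Matrix.diagonal fun j => (-1) ^ (j : ℕ)

lemma dco_zero : dco N 0 = 0 := by simp [dco]
lemma dco_top (h : Odd N) : dco N N = 0 := by
  simp [dco, Nat.not_even_iff_odd.mpr h]
lemma dco_ne (j : ℕ) (h0 : 0 < j) (h : j < N) : dco N j ≠ 0 := by
  unfold dco
  split_ifs with hj
  · exact_mod_cast h0.ne'
  · rw [sub_ne_zero]; exact_mod_cast h.ne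
lemma dco_succ (j : ℕ) : dco N (j+1) - dco N j = 1 - N * (-1)^j := by
  unfold dco
  rcases Nat.even_or_odd j with h | h
  · have h' : ¬ Even (j+1) := by simpa [Nat.even_add_one] using h
    rw [if_neg h', if_pos h, h.neg_one_pow]; push_cast; ring
  · have h' : Even (j+1) := by simpa [Nat.even_add_one] using h
    rw [if_pos h', if_neg (Nat.not_even_iff_odd.mpr h), h.neg_one_pow]; push_cast; ring

lemma DX (h : Odd N) : Dm N * Xm N = Xm N * Dm N + 1 - (N : ℂ) • Sm N := by
  ext i j
  have e1 : (Dm N * Xm N) i j = if i = j then dco N (i+1) else 0 := by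
    rw [Matrix.mul_apply]
    by_cases hi : (i : ℕ) + 1 < N
    · rw [Finset.sum_eq_single (⟨i+1, hi⟩ : Fin N)]
      · simp [Dm, Xm, Fin.ext_iff]
      · intro l _ hl
        have : (l : ℕ) ≠ i + 1 := fun h => hl (Fin.ext h)
        simp [Dm, this]
      · simp
    · have hi' : (i : ℕ) + 1 = N := by omega
      rw [hi', dco_top h, ite_self]
      refine Finset.sum_eq_zero (fun l _ => ?_)
      have : (l : ℕ) ≠ i + 1 := by omega
      simp [Dm, this]
  have e2 : (Xm N * Dm N) i j = if i = j then dco N i else 0 := by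
    rw [Matrix.mul_apply]
    by_cases hi : 0 < (i : ℕ)
    · rw [Finset.sum_eq_single (⟨i-1, by omega⟩ : Fin N)]
      · have h1 : (i : ℕ) = i - 1 + 1 := by omega
        have h2 : ((j : ℕ) = i - 1 + 1) ↔ i = j := by rw [Fin.ext_iff]; omega
        simp only [Dm, Xm, Matrix.of_apply, ← h1, if_true, one_mul]
        by_cases hij : i = j
        · subst hij; simp
        · have : ¬ (j : ℕ) = i := fun h => hij (Fin.ext h.symm)
          simp [hij, this]
      · intro l _ hl
        have : ¬ (i : ℕ) = l + 1 := fun h => hl (Fin.ext (by simp; omega))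
        simp [Xm, this]
      · simp
    · have hi' : (i : ℕ) = 0 := by omega
      rw [hi', dco_zero, ite_self]
      refine Finset.sum_eq_zero (fun l _ => ?_)
      have : ¬ (i : ℕ) = l + 1 := by omega
      simp [Xm, this]
  rw [Matrix.sub_apply, Matrix.add_apply, e1, e2, Matrix.smul_apply, Sm, Matrix.one_apply,
    Matrix.diagonal_apply, smul_eq_mul]
  by_cases hij : i = j
  · subst hij; simp only [if_true]; linear_combination dco_succ (N := N) i
  · simp [hij]

lemma SX : Sm N * Xm N = - (Xm N * Sm N) := by
  ext i j
  rw [Sm, Matrix.neg_apply, Matrix.diagonal_mul, Matrix.mul_diagonal, Xm, Matrix.of_apply]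
  split_ifs with h
  · rw [h, pow_succ]; ring
  · simp
lemma SD : Sm N * Dm N = - (Dm N * Sm N) := by
  ext i j
  rw [Sm, Matrix.neg_apply, Matrix.diagonal_mul, Matrix.mul_diagonal, Dm, Matrix.of_apply]
  split_ifs with h
  · rw [h, pow_succ]; ring
  · simp

lemma SDpow (b : ℕ) : ∃ c : ℂ, Sm N * Dm N ^ b = c • (Dm N ^ b * Sm N) := by
  induction b with
  | zero => exact ⟨1, by simp⟩
  | succ b ih =>
    obtain ⟨c, hc⟩ := ih
    refine ⟨-c, ?_⟩
    rw [pow_succ, ← mul_assoc, hc, smul_mul_assoc, mul_assoc, SD, mul_neg, smul_neg, neg_smul,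
      mul_assoc]

lemma DXpow (h : Odd N) (a : ℕ) : ∃ α β : ℂ, Dm N * Xm N ^ (a+1) =
    Xm N ^ (a+1) * Dm N + α • Xm N ^ a + β • (Xm N ^ a * Sm N) := by
  induction a with
  | zero =>
    refine ⟨1, -N, ?_⟩
    rw [zero_add, pow_one, DX h]; simp [sub_eq_add_neg]
  | succ a ih =>
    obtain ⟨α, β, hc⟩ := ih
    refine ⟨1 + α, - N - β, ?_⟩
    rw [pow_succ, ← mul_assoc, hc, add_mul, add_mul, mul_assoc, DX h, smul_mul_assoc,
      smul_mul_assoc, mul_assoc (Xm N ^ a), SX]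
    simp only [mul_add, mul_sub, mul_one, mul_neg, smul_neg, add_smul, sub_smul, neg_smul, one_smul,
      ← mul_assoc, ← pow_succ, mul_smul_comm]
    abel

/-- Left multiplication of a normally ordered monomial by the Dunkl operator. -/
lemma D_normal (h : Odd N) (a b : ℕ) : ∃ α β : ℂ, Dm N * (Xm N ^ a * Dm N ^ b) =
    Xm N ^ a * Dm N ^ (b+1) + α • (Xm N ^ (a-1) * Dm N ^ b)
      + β • (Xm N ^ (a-1) * Dm N ^ b * Sm N) ∧ (a = 0 → α = 0 ∧ β = 0) := by
  rcases a with _ | a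
  · exact ⟨0, 0, by simp [pow_succ'], by simp⟩
  · obtain ⟨α, β, hc⟩ := DXpow h a
    obtain ⟨c, hs⟩ := SDpow (N := N) b
    refine ⟨α, β * c, ?_, by simp⟩
    rw [← mul_assoc, hc, add_mul, add_mul, mul_assoc, ← pow_succ', smul_mul_assoc, smul_mul_assoc,
      mul_assoc (Xm N ^ a), hs, mul_smul_comm, smul_smul, mul_assoc]
    rfl

lemma XD_supp (a b : ℕ) (i j : Fin N) (h : (Xm N ^ a * Dm N ^ b) i j ≠ 0) :
    (i : ℕ) + b = j + a := by
  have hD : ∀ b (i j : Fin N), (Dm N ^ b) i j ≠ 0 → (i : ℕ) + b = j := by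
    intro b
    induction b with
    | zero =>
      intro i j h
      rw [pow_zero, Matrix.one_apply] at h
      by_contra h'
      exact h (if_neg (fun e => h' (by rw [e]; simp)))
    | succ b ih =>
      intro i j h
      rw [pow_succ, Matrix.mul_apply] at h
      obtain ⟨l, -, hl⟩ := Finset.exists_ne_zero_of_sum_ne_zero h
      have h1 := ih _ _ (left_ne_zero_of_mul hl)
      have h2 := right_ne_zero_of_mul hl
      simp only [Dm, Matrix.of_apply, ne_eq, ite_eq_right_iff, not_forall] at h2
      obtain ⟨h2, -⟩ := h2
      omega
  have hX : ∀ a (i j : Fin N), (Xm N ^ a) i j ≠ 0 → (i : ℕ) = j + a := by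
    intro b
    induction b with
    | zero =>
      intro i j h
      rw [pow_zero, Matrix.one_apply] at h
      by_contra h'
      exact h (if_neg (fun e => h' (by rw [e]; simp)))
    | succ b ih =>
      intro i j h
      rw [pow_succ, Matrix.mul_apply] at h
      obtain ⟨l, -, hl⟩ := Finset.exists_ne_zero_of_sum_ne_zero h
      have h1 := ih _ _ (left_ne_zero_of_mul hl)
      have h2 := right_ne_zero_of_mul hl
      simp only [Xm, Matrix.of_apply, ne_eq, ite_eq_right_iff, not_forall] at h2
      obtain ⟨h2, -⟩ := h2
      omega
  rw [Matrix.mul_apply] at h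
  obtain ⟨l, -, hl⟩ := Finset.exists_ne_zero_of_sum_ne_zero h
  have h1 := hX _ _ _ (left_ne_zero_of_mul hl)
  have h2 := hD _ _ _ (right_ne_zero_of_mul hl)
  omega

lemma XD_diag (r s : Fin N) : (Xm N ^ (r:ℕ) * Dm N ^ (s:ℕ)) r s ≠ 0 := by
  have hN : 0 < N := r.pos
  have hD : ∀ b (hb : b < N), (Dm N ^ b) ⟨0, hN⟩ ⟨b, hb⟩ ≠ 0 := by
    intro b
    induction b with
    | zero => intro _; simp
    | succ b ih =>
      intro hb
      rw [pow_succ, Matrix.mul_apply, Finset.sum_eq_single (⟨b, by omega⟩ : Fin N)]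
      · refine mul_ne_zero (ih _) ?_
        simp only [Dm, Matrix.of_apply, if_true]
        exact dco_ne _ (by omega) hb
      · intro l _ hl
        have : ¬ b = l := fun h => hl (Fin.ext h.symm)
        simp [Dm, this]
      · simp
  have hX : ∀ b (hb : b < N), (Xm N ^ b) ⟨b, hb⟩ ⟨0, hN⟩ ≠ 0 := by
    intro b
    induction b with
    | zero => intro _; simp
    | succ b ih =>
      intro hb
      rw [pow_succ', Matrix.mul_apply, Finset.sum_eq_single (⟨b, by omega⟩ : Fin N)]
      · refine mul_ne_zero ?_ (ih _)
        simp [Xm]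
      · intro l _ hl
        have : ¬ b = l := fun h => hl (Fin.ext h.symm)
        simp [Xm, this]
      · simp
  rw [Matrix.mul_apply, Finset.sum_eq_single (⟨0, hN⟩ : Fin N)]
  · exact mul_ne_zero (hX r r.2) (hD s s.2)
  · intro l _ hl
    by_contra hne
    have h1 := XD_supp (r:ℕ) 0 r l (by simpa using left_ne_zero_of_mul hne)
    exact hl (Fin.ext (by simp; omega))
  · simp

/-- Matrix units are combinations of normally ordered monomials. -/
lemma unit_mem (r s : Fin N) : Matrix.single r s (1:ℂ) ∈
    Submodule.span ℂ (Set.range fun p : Fin N × Fin N => Xm N ^ (p.1:ℕ) * Dm N ^ (p.2:ℕ)) := by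
  set P := Submodule.span ℂ (Set.range fun p : Fin N × Fin N => Xm N ^ (p.1:ℕ) * Dm N ^ (p.2:ℕ))
  have main : ∀ d : ℕ, ∀ r s : Fin N, N - s ≤ d → Matrix.single r s (1:ℂ) ∈ P := by
    intro d
    induction d with
    | zero => intro r s h; omega
    | succ d ih =>
      intro r s h
      set T := Xm N ^ (r:ℕ) * Dm N ^ (s:ℕ) with hT
      have hTP : T ∈ P := Submodule.subset_span ⟨(r, s), rfl⟩
      have e : T = ∑ i, ∑ j, Matrix.single i j (T i j) := Matrix.matrix_eq_sum_single T
      have e2 : T - T r s • Matrix.single r s 1 =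
          ∑ p ∈ (Finset.univ : Finset (Fin N × Fin N)).erase (r, s),
            T p.1 p.2 • Matrix.single p.1 p.2 (1:ℂ) := by
        rw [sub_eq_iff_eq_add', Finset.add_sum_erase _ (fun p : Fin N × Fin N =>
          T p.1 p.2 • Matrix.single p.1 p.2 (1:ℂ)) (Finset.mem_univ (r, s))]
        conv_lhs => rw [e]
        rw [Fintype.sum_prod_type]
        simp
      have e3 : T - T r s • Matrix.single r s 1 ∈ P := by
        rw [e2]
        refine Submodule.sum_mem _ (fun p hp => ?_)
        by_cases hz : T p.1 p.2 = 0
        · rw [hz, zero_smul]; exact Submodule.zero_mem _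
        · have h1 := XD_supp _ _ _ _ hz
          have h2 : p ≠ (r, s) := Finset.ne_of_mem_erase hp
          have h3 : (p.2 : ℕ) ≠ s := by
            intro h3
            apply h2
            ext <;> simp <;> omega
          by_cases h4 : (s : ℕ) < p.2
          · exact Submodule.smul_mem _ _ (ih _ _ (by omega))
          · exfalso
            apply hz
            rw [hT, Matrix.mul_apply]
            refine Finset.sum_eq_zero (fun l _ => ?_)
            by_contra hne
            have := XD_supp 0 (s:ℕ) l p.2 (by simpa using right_ne_zero_of_mul hne)
            omega
      have e4 : T r s • Matrix.single r s (1:ℂ) ∈ P := by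
        have := Submodule.sub_mem _ hTP e3
        simpa using this
      have := Submodule.smul_mem _ (T r s)⁻¹ e4
      rwa [smul_smul, inv_mul_cancel₀ (XD_diag r s), one_smul] at this
  exact main _ r s le_rfl

end mats
end DC

namespace DC
section low
variable {σ : Type*} [Finite σ]
/-- homogeneous pieces -/
noncomputable abbrev HH (σ : Type*) (m : ℕ) := homogeneousSubmodule σ ℂ m

lemma low_le {K A : Type*} [Field K] [AddCommGroup A] [Module K A]
    (B : ℕ → Submodule K A) {m m' : ℕ} (h : m ≤ m') : low B m ≤ low B m' := by
  induction m', h using Nat.le_induction with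
  | base => exact le_rfl
  | succ k _ ih => exact ih.trans le_sup_left

lemma piece_le {K A : Type*} [Field K] [AddCommGroup A] [Module K A]
    (B : ℕ → Submodule K A) {m m' : ℕ} (h : m < m') : B m ≤ low B m' :=
  le_trans (le_sup_right : B m ≤ low B (m+1)) (low_le B h)

lemma mul_X_low (j : σ) (m : ℕ) (f : MvPolynomial σ ℂ) (hf : f ∈ low (HH σ) m) :
    X j * f ∈ low (HH σ) (m+1) := by
  induction m generalizing f with
  | zero =>
    have : f = 0 := hf
    rw [this, mul_zero]; exact Submodule.zero_mem _
  | succ m ih =>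
    obtain ⟨a, ha, b, hb, rfl⟩ := Submodule.mem_sup.mp hf
    rw [mul_add]
    refine Submodule.add_mem _ (low_le _ (Nat.le_succ _) (ih a ha)) ?_
    refine piece_le (HH σ) (Nat.lt_succ_self (m+1)) ?_
    have := (isHomogeneous_X ℂ j).mul hb
    rwa [add_comm] at this

lemma homog_mul_X (j : σ) (f : MvPolynomial σ ℂ) (m : ℕ) :
    homogeneousComponent (m+1) (X j * f) = X j * homogeneousComponent m f := by
  induction f using MvPolynomial.induction_on' with
  | monomial u a =>
    have h1 : (monomial u a : MvPolynomial σ ℂ) ∈ homogeneousSubmodule σ ℂ u.degree :=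
      isHomogeneous_monomial _ rfl
    have h2 : X j * (monomial u a : MvPolynomial σ ℂ) ∈ homogeneousSubmodule σ ℂ (u.degree + 1) := by
      have := (isHomogeneous_X ℂ j).mul h1
      rwa [add_comm] at this
    rw [homogeneousComponent_of_mem h1, homogeneousComponent_of_mem h2]
    by_cases h : m = u.degree <;> simp [h]
  | add p q hp hq => rw [mul_add, map_add, map_add, hp, hq, mul_add]

lemma homog_mul_X_zero (j : σ) (f : MvPolynomial σ ℂ) :
    homogeneousComponent 0 (X j * f) = 0 := by
  have h : coeff 0 (X j * f) = 0 := by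
    have : constantCoeff (X j * f) = 0 := by rw [map_mul, constantCoeff_X, zero_mul]
    exact this
  rw [homogeneousComponent_zero, h, C_0]
end low

section phi
variable {n N : ℕ}

/-- Normal ordering. -/
noncomputable def Phi (n N : ℕ) : MvPolynomial (Fin n ⊕ Fin n) ℂ →ₗ[ℂ]
    Matrix (Fin n → Fin N) (Fin n → Fin N) ℂ :=
  (basisMonomials (Fin n ⊕ Fin n) ℂ).constr ℂ
    (fun m => kron (fun i => Xm N ^ (m (Sum.inl i)) * Dm N ^ (m (Sum.inr i))))

lemma Phi_monomial (m : (Fin n ⊕ Fin n) →₀ ℕ) (c : ℂ) : Phi n N (monomial m c) =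
    c • kron (fun i => Xm N ^ (m (Sum.inl i)) * Dm N ^ (m (Sum.inr i))) := by
  have h : (monomial m c : MvPolynomial (Fin n ⊕ Fin n) ℂ) =
      c • basisMonomials (Fin n ⊕ Fin n) ℂ m := by
    rw [coe_basisMonomials, smul_monomial, smul_eq_mul, mul_one]
  rw [h, map_smul, Phi, Module.Basis.constr_basis]

/-- Acting on a vector `w`. -/
noncomputable def psi (w : (Fin n → Fin N) → ℂ) :
    MvPolynomial (Fin n ⊕ Fin n) ℂ →ₗ[ℂ] ((Fin n → Fin N) → ℂ) where
  toFun f := (Phi n N f).mulVec w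
  map_add' f g := by rw [map_add, Matrix.add_mulVec]
  map_smul' c f := by rw [map_smul, Matrix.smul_mulVec, RingHom.id_apply]

lemma psi_apply (w : (Fin n → Fin N) → ℂ) (f) : psi w f = (Phi n N f).mulVec w := rfl

/-- support in odd exponents -/
def OddSupp (w : (Fin n → Fin N) → ℂ) : Prop := ∀ e, w e ≠ 0 → ∀ i, Odd (e i : ℕ)

lemma kron_S (A : Fin n → Matrix (Fin N) (Fin N) ℂ) (i : Fin n) (B) (w) (hw : OddSupp w) :
    (kron (Function.update A i (B * Sm N))).mulVec w =
      - (kron (Function.update A i B)).mulVec w := by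
  ext e
  rw [Pi.neg_apply, Matrix.mulVec, Matrix.mulVec, dotProduct, dotProduct,
    ← Finset.sum_neg_distrib]
  refine Finset.sum_congr rfl (fun e' _ => ?_)
  by_cases h : w e' = 0
  · simp [h]
  · rw [← neg_mul]
    congr 1
    rw [kron_apply, kron_apply, ← Finset.mul_prod_erase _ _ (Finset.mem_univ i),
      ← Finset.mul_prod_erase _ _ (Finset.mem_univ i), ← neg_mul]
    congr 1
    · rw [Function.update_self, Function.update_self, Sm, Matrix.mul_diagonal,
        (hw e' h i).neg_one_pow]
      ring
    · refine Finset.prod_congr rfl (fun j hj => ?_)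
      rw [Function.update_of_ne (Finset.ne_of_mem_erase hj),
        Function.update_of_ne (Finset.ne_of_mem_erase hj)]

/-- The operator attached to a variable. -/
def opM (n N : ℕ) (j : Fin n ⊕ Fin n) : Matrix (Fin n → Fin N) (Fin n → Fin N) ℂ :=
  Sum.elim (fun i => kron (Function.update 1 i (Xm N))) (fun i => kron (Function.update 1 i (Dm N))) j

lemma kron_update_mul (i : Fin n) (T) (A : Fin n → Matrix (Fin N) (Fin N) ℂ) :
    kron (Function.update 1 i T) * kron A = kron (Function.update A i (T * A i)) := by
  rw [kron_mul]
  congr 1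
  funext l
  by_cases h : l = i
  · subst h; simp
  · simp [h]

lemma op_mono (hN : Odd N) (m : (Fin n ⊕ Fin n) →₀ ℕ) (j : Fin n ⊕ Fin n) :
    ∃ u ∈ low (HH (Fin n ⊕ Fin n)) (m.degree + 1), ∀ w : (Fin n → Fin N) → ℂ, OddSupp w →
      (opM n N j).mulVec (psi w (monomial m 1)) = psi w (X j * monomial m 1) + psi w u := by
  have hX : ∀ j : Fin n ⊕ Fin n, (X j * monomial m 1 : MvPolynomial (Fin n ⊕ Fin n) ℂ) =
      monomial (Finsupp.single j 1 + m) 1 := by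
    intro j; rw [X, monomial_mul, one_mul]
  rcases j with i | i
  · refine ⟨0, Submodule.zero_mem _, fun w hw => ?_⟩
    rw [map_zero, add_zero, hX, psi_apply, psi_apply, Phi_monomial, Phi_monomial, one_smul, one_smul,
      Matrix.mulVec_mulVec]
    congr 1
    rw [opM, Sum.elim_inl, kron_update_mul]
    congr 1
    funext l
    by_cases h : l = i
    · subst h
      simp [pow_add, mul_assoc]
    · simp [h, Ne.symm h]
  · obtain ⟨α, β, h1, h2⟩ := D_normal hN (m (Sum.inl i)) (m (Sum.inr i))
    have e1 : ∀ w : (Fin n → Fin N) → ℂ, OddSupp w →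
      (opM n N (Sum.inr i)).mulVec (psi w (monomial m 1)) = psi w (X (Sum.inr i) * monomial m 1) +
        psi w ((α - β) • monomial (m - Finsupp.single (Sum.inl i) 1) 1) := by
      intro w hw
      rw [map_smul, hX, psi_apply, psi_apply, psi_apply, Phi_monomial, Phi_monomial, Phi_monomial,
        one_smul, one_smul, one_smul, Matrix.mulVec_mulVec]
      rw [opM, Sum.elim_inr, kron_update_mul, h1, kron_update_add, kron_update_add,
        kron_update_smul, kron_update_smul, Matrix.add_mulVec, Matrix.add_mulVec,
        Matrix.smul_mulVec, Matrix.smul_mulVec, kron_S _ _ _ _ hw, smul_neg, add_assoc,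
        ← sub_eq_add_neg, ← sub_smul]
      congr 1
      · congr 2
        funext l
        by_cases h : l = i
        · subst h
          simp [add_comm]
        · simp [h, Ne.symm h]
      · congr 3
        funext l
        by_cases h : l = i
        · subst h
          simp
        · simp [h, Ne.symm h]
    refine ⟨_, ?_, e1⟩
    by_cases h0 : m (Sum.inl i) = 0
    · rw [(h2 h0).1, (h2 h0).2]; simp
    · refine Submodule.smul_mem _ _ (piece_le (HH _) ?_ (isHomogeneous_monomial _ rfl))
      have : (m - Finsupp.single (Sum.inl i) 1).degree ≤ m.degree := by
        apply Finsupp.degree_mono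
        exact tsub_le_self
      omega

lemma op_low (hN : Odd N) (j : Fin n ⊕ Fin n) (m : ℕ) (f) (hf : f ∈ low (HH (Fin n ⊕ Fin n)) m) :
    ∃ u ∈ low (HH (Fin n ⊕ Fin n)) m, ∀ w : (Fin n → Fin N) → ℂ, OddSupp w →
      (opM n N j).mulVec (psi w f) = psi w (X j * f) + psi w u := by
  induction m generalizing f with
  | zero =>
    have : f = 0 := hf
    subst this
    exact ⟨0, Submodule.zero_mem _, fun w _ => by simp⟩
  | succ m ih =>
    obtain ⟨a, ha, b, hb, rfl⟩ := Submodule.mem_sup.mp hf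
    obtain ⟨u, hu, hu'⟩ := ih a ha
    choose v hv hv' using fun s : (Fin n ⊕ Fin n) →₀ ℕ => op_mono (N := N) hN s j
    refine ⟨u + ∑ s ∈ b.support, coeff s b • v s, ?_, fun w hw => ?_⟩
    · refine Submodule.add_mem _ (low_le _ (Nat.le_succ _) hu) (Submodule.sum_mem _ (fun s hs => ?_))
      refine Submodule.smul_mem _ _ ?_
      have hd : s.degree = m := by
        have h := hb (mem_support_iff.mp hs)
        rw [← h, Finsupp.degree_eq_weight_one]
        rfl
      rw [← hd]; exact hv s
    · have hb' : (∑ s ∈ b.support, coeff s b • monomial s (1:ℂ)) = b := by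
        conv_rhs => rw [b.as_sum]
        simp [smul_monomial]
      have key : (opM n N j).mulVec (psi w b) = psi w (X j * b) +
          psi w (∑ s ∈ b.support, coeff s b • v s) := by
        have q1 : psi w b = ∑ s ∈ b.support, coeff s b • psi w (monomial s 1) := by
          conv_lhs => rw [← hb']
          rw [map_sum]
          exact Finset.sum_congr rfl (fun s _ => map_smul _ _ _)
        have q2 : psi w (X j * b) = ∑ s ∈ b.support, coeff s b • psi w (X j * monomial s 1) := by
          conv_lhs => rw [← hb']
          rw [Finset.mul_sum, map_sum]
          exact Finset.sum_congr rfl (fun s _ => by rw [mul_smul_comm, map_smul])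
        rw [q1, q2, Matrix.mulVec_sum, map_sum, ← Finset.sum_add_distrib]
        refine Finset.sum_congr rfl (fun s _ => ?_)
        rw [Matrix.mulVec_smul, hv' s w hw, map_smul, smul_add]
      rw [map_add, Matrix.mulVec_add, hu' w hw, key, mul_add, map_add, map_add]
      abel

/-- Several vectors at once. -/
noncomputable def phi {ι : Type*} (v : ι → (Fin n → Fin N) → ℂ) :
    MvPolynomial (Fin n ⊕ Fin n) ℂ →ₗ[ℂ] (ι → (Fin n → Fin N) → ℂ) :=
  LinearMap.pi (fun g => psi (v g))

lemma phi_apply {ι : Type*} (v : ι → (Fin n → Fin N) → ℂ) (f) (g) : phi v f g = psi (v g) f := rfl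

/-- polynomials all of whose components are leading forms of relations -/
def InLead {ι : Type*} (v : ι → (Fin n → Fin N) → ℂ) (f : MvPolynomial (Fin n ⊕ Fin n) ℂ) : Prop :=
  ∀ m, homogeneousComponent m f ∈ lead (HH (Fin n ⊕ Fin n)) (phi v) m

lemma inLead_X {ι : Type*} (hN : Odd N) (v : ι → (Fin n → Fin N) → ℂ) (hv : ∀ g, OddSupp (v g))
    (j) (f) (hf : InLead v f) : InLead v (X j * f) := by
  intro m
  rcases m with _ | m
  · rw [homog_mul_X_zero]; exact Submodule.zero_mem _
  · rw [homog_mul_X]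
    obtain ⟨h1, h2⟩ := hf m
    obtain ⟨p, hp, hp'⟩ := h2
    refine ⟨?_, ?_⟩
    · have := (isHomogeneous_X ℂ j).mul h1
      rwa [add_comm] at this
    · obtain ⟨u, hu, hu'⟩ := op_low (N := N) hN j (m+1) (homogeneousComponent m f)
        (piece_le (HH _) (Nat.lt_succ_self m) h1)
      obtain ⟨u2, hu2, hu2'⟩ := op_low (N := N) hN j m p hp
      refine ⟨X j * p + u2 - u, ?_, ?_⟩
      · refine Submodule.sub_mem _ (Submodule.add_mem _ (mul_X_low _ _ _ hp) ?_) hu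
        exact low_le _ (Nat.le_succ _) hu2
      · funext g
        have a := hu' _ (hv g)
        have b := hu2' _ (hv g)
        have c := congrFun hp' g
        rw [phi_apply, phi_apply] at c
        rw [phi_apply, phi_apply, map_sub, map_add, ← b, c, a]
        abel

lemma inLead_add {ι : Type*} (v : ι → (Fin n → Fin N) → ℂ) (f g) (hf : InLead v f)
    (hg : InLead v g) : InLead v (f + g) := fun m => by
  rw [map_add]; exact Submodule.add_mem _ (hf m) (hg m)

lemma inLead_mul {ι : Type*} (hN : Odd N) (v : ι → (Fin n → Fin N) → ℂ) (hv : ∀ g, OddSupp (v g))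
    (r f) (hf : InLead v f) : InLead v (r * f) := by
  induction r using MvPolynomial.induction_on generalizing f with
  | C a =>
    intro m
    rw [← smul_eq_C_mul, map_smul]
    exact Submodule.smul_mem _ _ (hf m)
  | add p q hp hq => rw [add_mul]; exact inLead_add v _ _ (hp f hf) (hq f hf)
  | mul_X p j hp => rw [mul_assoc]; exact hp _ (inLead_X hN v hv j f hf)

end phi
end DC

namespace DC
section equiv
variable {n N : ℕ}

/-- permuting coordinates -/
def act (σ : Equiv.Perm (Fin n)) (T : (Fin n → Fin N) → ℂ) : (Fin n → Fin N) → ℂ :=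
  fun e => T (e ∘ σ)

/-- permuting variables -/
noncomputable abbrev ren (σ : Equiv.Perm (Fin n)) :
    MvPolynomial (Fin n ⊕ Fin n) ℂ →ₐ[ℂ] MvPolynomial (Fin n ⊕ Fin n) ℂ :=
  rename (Sum.map σ σ)

lemma summap_inj (σ : Equiv.Perm (Fin n)) : Function.Injective (Sum.map σ σ) :=
  Function.Injective.sumMap σ.injective σ.injective

lemma Phi_ren (σ : Equiv.Perm (Fin n)) (f) (e e' : Fin n → Fin N) :
    Phi n N (ren σ f) e e' = Phi n N f (e ∘ σ) (e' ∘ σ) := by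
  induction f using MvPolynomial.induction_on' with
  | add p q hp hq => rw [map_add, map_add, map_add, Matrix.add_apply, Matrix.add_apply, hp, hq]
  | monomial m c =>
    rw [rename_monomial, Phi_monomial, Phi_monomial, Matrix.smul_apply, Matrix.smul_apply,
      kron_apply, kron_apply, ← Equiv.prod_comp σ]
    congr 1
    refine Finset.prod_congr rfl (fun i _ => ?_)
    have h1 : (Finsupp.mapDomain (Sum.map σ σ) m) (Sum.inl (σ i)) = m (Sum.inl i) :=
      Finsupp.mapDomain_apply (summap_inj σ) m (Sum.inl i)
    have h2 : (Finsupp.mapDomain (Sum.map σ σ) m) (Sum.inr (σ i)) = m (Sum.inr i) :=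
      Finsupp.mapDomain_apply (summap_inj σ) m (Sum.inr i)
    rw [h1, h2]; rfl

lemma psi_ren (σ : Equiv.Perm (Fin n)) (w : (Fin n → Fin N) → ℂ) (f) :
    psi (act σ w) (ren σ f) = act σ (psi w f) := by
  funext e
  simp only [psi_apply, act, Matrix.mulVec, dotProduct]
  have : ∀ e', Phi n N (ren σ f) e e' * w (e' ∘ σ) = (fun e'' => Phi n N f (e ∘ σ) e'' * w e'')
      ((Equiv.arrowCongr σ.symm (Equiv.refl (Fin N))) e') := by
    intro e'
    rw [Phi_ren]; rfl
  rw [Finset.sum_congr rfl (fun e' _ => this e')]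
  exact Equiv.sum_comp ((Equiv.arrowCongr σ.symm (Equiv.refl (Fin N))))
    (fun e'' => Phi n N f (e ∘ σ) e'' * w e'')

lemma Phi_supp (f) (e e' : Fin n → Fin N) (h : Phi n N f e e' ≠ 0) :
    ∃ m ∈ f.support, ∀ i, (e i : ℕ) + m (Sum.inr i) = e' i + m (Sum.inl i) := by
  by_contra hc
  push Not at hc
  apply h
  rw [f.as_sum, map_sum, Matrix.sum_apply]
  refine Finset.sum_eq_zero (fun m hm => ?_)
  obtain ⟨i, hi⟩ := hc m hm
  rw [Phi_monomial, Matrix.smul_apply, kron_apply, Finset.prod_eq_zero (Finset.mem_univ i), smul_zero]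
  by_contra h'
  exact hi (XD_supp _ _ _ _ h')

lemma psi_supp (w : (Fin n → Fin N) → ℂ) (f) (e) (h : psi w f e ≠ 0) :
    ∃ e', w e' ≠ 0 ∧ ∃ m ∈ f.support, ∀ i, (e i : ℕ) + m (Sum.inr i) = e' i + m (Sum.inl i) := by
  rw [psi_apply, Matrix.mulVec, dotProduct] at h
  obtain ⟨e', _, he'⟩ := Finset.exists_ne_zero_of_sum_ne_zero h
  exact ⟨e', right_ne_zero_of_mul he', Phi_supp f e e' (left_ne_zero_of_mul he')⟩

lemma psi_one (w : (Fin n → Fin N) → ℂ) : psi w 1 = w := by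
  have : (1 : MvPolynomial (Fin n ⊕ Fin n) ℂ) = monomial 0 1 := rfl
  rw [psi_apply, this, Phi_monomial, one_smul]
  have h : kron (fun i : Fin n => Xm N ^ ((0 : (Fin n ⊕ Fin n) →₀ ℕ) (Sum.inl i)) *
      Dm N ^ ((0 : (Fin n ⊕ Fin n) →₀ ℕ) (Sum.inr i))) = 1 := by
    ext e e'
    rw [kron_apply]
    simp only [Finsupp.coe_zero, Pi.zero_apply, pow_zero, mul_one, Matrix.one_apply]
    by_cases h : e = e'
    · simp [h]
    · rw [if_neg h]
      obtain ⟨i, hi⟩ := Function.ne_iff.mp h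
      exact Finset.prod_eq_zero (Finset.mem_univ i) (if_neg hi)
  rw [h, Matrix.one_mulVec]

lemma psi_smul (c : ℂ) (w : (Fin n → Fin N) → ℂ) (f) : psi (c • w) f = c • psi w f := by
  rw [psi_apply, psi_apply, Matrix.mulVec_smul]

lemma bAct_one (σ : Equiv.Perm (Fin n)) : bAct n 1 σ = ren σ := by
  ext j
  rcases j with i | i <;> simp [bAct, ren]

lemma ren_homog (σ : Equiv.Perm (Fin n)) (f) (m) :
    homogeneousComponent m (ren σ f) = ren σ (homogeneousComponent m f) := by
  induction f using MvPolynomial.induction_on' with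
  | add p q hp hq => rw [map_add, map_add, map_add, map_add, hp, hq]
  | monomial u a =>
    have h1 : (monomial u a : MvPolynomial (Fin n ⊕ Fin n) ℂ) ∈ homogeneousSubmodule _ ℂ u.degree :=
      isHomogeneous_monomial _ rfl
    have h2 : ren σ (monomial u a : MvPolynomial (Fin n ⊕ Fin n) ℂ) ∈ homogeneousSubmodule _ ℂ u.degree :=
      IsHomogeneous.rename_isHomogeneous h1
    rw [homogeneousComponent_of_mem h1, homogeneousComponent_of_mem h2]
    by_cases h : m = u.degree <;> simp [h]

lemma coeff_sign (ε : Fin n → ℤˣ) (f) (m : (Fin n ⊕ Fin n) →₀ ℕ) :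
    coeff m (bAct n ε 1 f) = (∏ i, ((ε i : ℤ) : ℂ) ^ (m (Sum.inl i) + m (Sum.inr i))) * coeff m f := by
  induction f using MvPolynomial.induction_on' with
  | add p q hp hq => rw [map_add, coeff_add, coeff_add, hp, hq, mul_add]
  | monomial u a =>
    have : bAct n ε 1 (monomial u a) =
        (∏ i, ((ε i : ℤ) : ℂ) ^ (u (Sum.inl i) + u (Sum.inr i))) • monomial u a := by
      rw [bAct, aeval_monomial, Finsupp.prod_fintype _ _ (by simp), Fintype.prod_sum_type]
      simp only [Sum.elim_inl, Sum.elim_inr, Equiv.Perm.one_apply, smul_pow]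
      rw [monomial_eq, Finsupp.prod_fintype _ _ (by simp), Fintype.prod_sum_type]
      simp only [smul_eq_C_mul, algebraMap_eq, Finset.prod_mul_distrib, map_mul, map_prod, map_pow, pow_add]
      ring
    rw [this, coeff_smul, coeff_monomial, smul_eq_mul]
    split_ifs with h
    · rw [h]
    · rw [mul_zero, mul_zero]

lemma sign_even (f) (hf : ∀ ε, bAct n ε 1 f = f) (m : (Fin n ⊕ Fin n) →₀ ℕ) (hm : m ∈ f.support)
    (i : Fin n) : Even (m (Sum.inl i) + m (Sum.inr i)) := by
  have h := coeff_sign (Function.update 1 i (-1)) f m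
  rw [hf, Finset.prod_eq_single i] at h
  · by_contra ho
    rw [Nat.not_even_iff_odd] at ho
    rw [Function.update_self] at h
    simp only [Units.val_neg, Units.val_one, Int.cast_neg, Int.cast_one, ho.neg_one_pow] at h
    have : coeff m f = 0 := by linear_combination h / 2
    exact (mem_support_iff.mp hm) this
  · intro j _ hj; simp [hj]
  · simp

lemma supp_homog {σ : Type*} (f : MvPolynomial σ ℂ) (m : ℕ) (s) (hs : s ∈ (homogeneousComponent m f).support) :
    s ∈ f.support := by
  rw [mem_support_iff, coeff_homogeneousComponent] at hs
  rw [mem_support_iff]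
  intro h
  simp [h] at hs

/-- Rigidity of a vector. -/
def Rigid (w : (Fin n → Fin N) → ℂ) : Prop :=
  ∀ u, OddSupp u → (∀ σ (c : ℂ), act σ w = c • w → act σ u = c • u) → ∃ c : ℂ, u = c • w

lemma oddSupp_act (σ : Equiv.Perm (Fin n)) (w : (Fin n → Fin N) → ℂ) (hw : OddSupp w) :
    OddSupp (act σ w) := by
  intro e he i
  have := hw _ he (σ.symm i)
  simpa using this

lemma gen_inLead {ι : Type*} (w : (Fin n → Fin N) → ℂ) (hw : OddSupp w) (hr : Rigid w)
    (τ : ι → Equiv.Perm (Fin n)) (f) (hf : ∀ ε σ, bAct n ε σ f = f) (h0 : constantCoeff f = 0) :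
    InLead (fun g => act (τ g) w) f := by
  intro m
  rcases Nat.eq_zero_or_pos m with rfl | hm
  · have : homogeneousComponent 0 f = 0 := by
      have h : coeff 0 f = 0 := h0
      rw [homogeneousComponent_zero, h, C_0]
    rw [this]; exact Submodule.zero_mem _
  · refine ⟨homogeneousComponent_mem _ _, ?_⟩
    set p := homogeneousComponent m f with hp
    have hpr : ∀ σ, ren σ p = p := by
      intro σ
      rw [hp, ← ren_homog, ← bAct_one, hf]
    have hps : ∀ σ, psi (act σ w) p = act σ (psi w p) := by
      intro σ
      have := psi_ren σ w p
      rwa [hpr] at this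
    have hodd : OddSupp (psi w p) := by
      intro e he i
      obtain ⟨e', h1, s, hs, h2⟩ := psi_supp w p e he
      have a := hw e' h1 i
      have b := sign_even f (fun ε => hf ε 1) s (supp_homog f m s hs) i
      have c := h2 i
      rw [Nat.odd_iff] at *
      rw [Nat.even_iff] at b
      omega
    obtain ⟨c, hc⟩ := hr (psi w p) hodd (by
      intro σ c h
      rw [← hps, h, psi_smul])
    refine ⟨c • 1, Submodule.smul_mem _ _ (piece_le (HH _) hm (isHomogeneous_one _ _)), ?_⟩
    funext g
    rw [phi_apply, phi_apply, map_smul, psi_one, hps, hc]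
    rfl

lemma diag_inLead {ι : Type*} (hN : Odd N) (w : (Fin n → Fin N) → ℂ) (hw : OddSupp w) (hr : Rigid w)
    (τ : ι → Equiv.Perm (Fin n)) (f) (hf : f ∈ diagIdeal n) :
    InLead (fun g => act (τ g) w) f := by
  refine Submodule.span_induction (p := fun f _ => InLead (fun g => act (τ g) w) f) ?_ ?_ ?_ ?_ hf
  · rintro x ⟨h1, h2⟩
    exact gen_inLead w hw hr τ x h1 h2
  · intro m; rw [map_zero]; exact Submodule.zero_mem _
  · intro x y _ _ hx hy; exact inLead_add _ _ _ hx hy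
  · intro a x _ hx
    exact inLead_mul hN _ (fun g => oddSupp_act _ _ hw) a x hx
end equiv

section fin
variable {n : ℕ}

lemma var_nil (emb : Fin n → Fin n ⊕ Fin n)
    (hemb : ∀ ε σ i, bAct n ε σ (X (emb i)) = (((ε i : ℤ) : ℂ)) • X (emb (σ i))) (i : Fin n) :
    (X (emb i) : MvPolynomial (Fin n ⊕ Fin n) ℂ) ^ (2 * n) ∈ diagIdeal n := by
  set P : Polynomial (MvPolynomial (Fin n ⊕ Fin n) ℂ) :=
    ∏ j, (Polynomial.X - Polynomial.C (X (emb j) ^ 2)) with hP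
  have hmon : P.Monic := Polynomial.monic_prod_of_monic _ _ (fun j _ => Polynomial.monic_X_sub_C _)
  have hdeg : P.natDegree = n := by
    rw [hP, Polynomial.natDegree_prod_of_monic _ _ (fun j _ => Polynomial.monic_X_sub_C _)]
    simp only [Polynomial.natDegree_X_sub_C]
    simp
  have hev : P.eval (X (emb i) ^ 2) = 0 := by
    rw [hP, Polynomial.eval_prod]
    exact Finset.prod_eq_zero (Finset.mem_univ i) (by simp)
  have hinv : ∀ ε σ, P.map (bAct n ε σ : _ →+* _) = P := by
    intro ε σ
    rw [hP, Polynomial.map_prod, ← Equiv.prod_comp σ (fun j => Polynomial.X - Polynomial.C (X (emb j) ^ 2))]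
    refine Finset.prod_congr rfl (fun j _ => ?_)
    rw [Polynomial.map_sub, Polynomial.map_X, Polynomial.map_C, RingHom.coe_coe, map_pow, hemb, smul_pow]
    have : (((ε j : ℤ) : ℂ)) ^ 2 = 1 := by
      rw [← Int.cast_pow, ← Units.val_pow_eq_pow_val]; simp
    rw [this, one_smul]
  have hcc : P.map (constantCoeff : _ →+* ℂ) = Polynomial.X ^ n := by
    rw [hP, Polynomial.map_prod]
    simp
  have hmem : ∀ k < n, P.coeff k ∈ diagIdeal n := by
    intro k hk
    refine Ideal.subset_span ⟨fun ε σ => ?_, ?_⟩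
    · conv_rhs => rw [← hinv ε σ]
      rw [Polynomial.coeff_map]; rfl
    · rw [← Polynomial.coeff_map, hcc, Polynomial.coeff_X_pow, if_neg hk.ne]
  rw [Polynomial.eval_eq_sum_range, hdeg, Finset.sum_range_succ] at hev
  have h1 : P.coeff n = 1 := by
    have := hmon.coeff_natDegree
    rwa [hdeg] at this
  rw [h1, one_mul, ← pow_mul] at hev
  rw [eq_neg_of_add_eq_zero_right hev]
  refine Ideal.neg_mem_iff _ |>.mpr (Ideal.sum_mem _ (fun k hk => ?_))
  exact Ideal.mul_mem_right _ _ (hmem k (Finset.mem_range.mp hk))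

lemma quot_finite : FiniteDimensional ℂ (MvPolynomial (Fin n ⊕ Fin n) ℂ ⧸ diagIdeal n) := by
  have hinteg : Algebra.IsIntegral ℂ (MvPolynomial (Fin n ⊕ Fin n) ℂ ⧸ diagIdeal n) := by
    constructor
    intro x
    obtain ⟨p, rfl⟩ := Ideal.Quotient.mk_surjective x
    have hX : ∀ j, IsIntegral ℂ (Ideal.Quotient.mk (diagIdeal n) (X j)) := by
      intro j
      have hnil : (Ideal.Quotient.mk (diagIdeal n) (X j)) ^ (2 * n) = 0 := by
        rw [← map_pow, Ideal.Quotient.eq_zero_iff_mem]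
        rcases j with i | i
        · exact var_nil Sum.inl (by intro ε σ i; simp [bAct]) i
        · exact var_nil Sum.inr (by intro ε σ i; simp [bAct]) i
      refine ⟨Polynomial.X ^ (2 * n), Polynomial.monic_X_pow _, ?_⟩
      simp [hnil]
    induction p using MvPolynomial.induction_on with
    | C a => exact isIntegral_algebraMap (R := ℂ) (x := a)
    | add p q hp hq => rw [map_add]; exact hp.add hq
    | mul_X p j hp => rw [map_mul]; exact hp.mul (hX j)
  exact Algebra.IsIntegral.finite

end fin
end DC

namespace DC
section blocks
variable {n l k : ℕ}

/-- product of determinants -/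
noncomputable def W (blk : Fin l × Fin k ≃ Fin n) (e : Fin n → Fin (2 * k + 1)) : ℂ :=
  ∏ a, Matrix.det (Matrix.of fun j c : Fin k =>
    if ((e (blk (a, j)) : ℕ)) = 2 * (c : ℕ) + 1 then (1 : ℂ) else 0)

lemma W_odd (blk : Fin l × Fin k ≃ Fin n) : OddSupp (W blk) := by
  intro e he i
  by_contra hi
  apply he
  obtain ⟨⟨a, j⟩, rfl⟩ := blk.surjective i
  refine Finset.prod_eq_zero (Finset.mem_univ a) ?_
  refine Matrix.det_eq_zero_of_row_eq_zero j (fun c => ?_)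
  rw [Matrix.of_apply, if_neg]
  intro h
  exact hi ⟨c, h⟩

/-- permutation preserving the blocks -/
def bperm (blk : Fin l × Fin k ≃ Fin n) (π : Fin l → Equiv.Perm (Fin k)) : Equiv.Perm (Fin n) :=
  blk.permCongr (Equiv.prodCongrRight π)

lemma bperm_apply (blk : Fin l × Fin k ≃ Fin n) (π : Fin l → Equiv.Perm (Fin k)) (a j) :
    bperm blk π (blk (a, j)) = blk (a, π a j) := by
  simp [bperm, Equiv.permCongr_apply]

lemma W_act (blk : Fin l × Fin k ≃ Fin n) (π : Fin l → Equiv.Perm (Fin k)) :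
    act (bperm blk π) (W blk) = (∏ a, ((Equiv.Perm.sign (π a) : ℤ) : ℂ)) • W blk := by
  funext e
  rw [Pi.smul_apply, smul_eq_mul]
  simp only [act, W]
  rw [← Finset.prod_mul_distrib]
  refine Finset.prod_congr rfl (fun a _ => ?_)
  rw [← Matrix.det_permute (π a)]
  congr 1
  ext j c
  simp [bperm_apply]

/-- The vector of odd exponents attached to `γ`. -/
def oddv (blk : Fin l × Fin k ≃ Fin n) (γ : Fin l → Fin k → Fin k) (i : Fin n) : Fin (2 * k + 1) :=
  ⟨2 * (γ (blk.symm i).1 (blk.symm i).2 : ℕ) + 1, by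
    have := (γ (blk.symm i).1 (blk.symm i).2).isLt; omega⟩

lemma oddv_apply (blk : Fin l × Fin k ≃ Fin n) (γ : Fin l → Fin k → Fin k) (a j) :
    (oddv blk γ (blk (a, j)) : ℕ) = 2 * (γ a j : ℕ) + 1 := by
  simp [oddv]

lemma oddv_exists (blk : Fin l × Fin k ≃ Fin n) (e : Fin n → Fin (2 * k + 1))
    (h : ∀ i, Odd (e i : ℕ)) : ∃ γ, e = oddv blk γ := by
  choose g hg using h
  refine ⟨fun a j => ⟨g (blk (a, j)), ?_⟩, ?_⟩
  · have := (e (blk (a, j))).isLt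
    have := hg (blk (a, j))
    omega
  · funext i
    obtain ⟨⟨a, j⟩, rfl⟩ := blk.surjective i
    apply Fin.ext
    rw [oddv_apply]
    exact hg _

lemma W_oddv_one (blk : Fin l × Fin k ≃ Fin n) : W blk (oddv blk fun _ j => j) = 1 := by
  rw [W]
  refine Finset.prod_eq_one (fun a _ => ?_)
  convert Matrix.det_one (n := Fin k) (R := ℂ)
  ext j c
  rw [Matrix.of_apply, oddv_apply, Matrix.one_apply]
  simp [Fin.ext_iff]

lemma oddv_perm (blk : Fin l × Fin k ≃ Fin n) (γ : Fin l → Fin k → Fin k)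
    (π : Fin l → Equiv.Perm (Fin k)) :
    oddv blk γ ∘ bperm blk π = oddv blk (fun a j => γ a (π a j)) := by
  funext i
  obtain ⟨⟨a, j⟩, rfl⟩ := blk.surjective i
  apply Fin.ext
  rw [Function.comp_apply, bperm_apply, oddv_apply, oddv_apply]

lemma anti_zero (blk : Fin l × Fin k ≃ Fin n) (u : (Fin n → Fin (2 * k + 1)) → ℂ)
    (hu : ∀ σ (c : ℂ), act σ (W blk) = c • (W blk) → act σ u = c • u)
    (γ : Fin l → Fin k → Fin k) (a : Fin l) (h : ¬ Function.Injective (γ a)) :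
    u (oddv blk γ) = 0 := by
  rw [Function.not_injective_iff] at h
  obtain ⟨j, j', h1, h2⟩ := h
  have := hu _ _ (W_act blk (Function.update 1 a (Equiv.swap j j')))
  have h3 := congrFun this (oddv blk γ)
  rw [Finset.prod_eq_single a] at h3
  · rw [act, oddv_perm] at h3
    have h4 : (fun b i => γ b ((Function.update 1 a (Equiv.swap j j') : Fin l → Equiv.Perm (Fin k)) b i)) = γ := by
      funext b i
      by_cases hb : b = a
      · subst hb
        rw [Function.update_self]
        by_cases hi : i = j
        · rw [hi, Equiv.swap_apply_left, h1]
        · by_cases hi' : i = j'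
          · rw [hi', Equiv.swap_apply_right, h1]
          · rw [Equiv.swap_apply_of_ne_of_ne hi hi']
      · rw [Function.update_of_ne hb]; rfl
    rw [h4, Pi.smul_apply, Function.update_self, Equiv.Perm.sign_swap h2] at h3
    simp only [Units.val_neg, Units.val_one, Int.cast_neg, Int.cast_one, smul_eq_mul] at h3
    linear_combination h3 / 2
  · intro b _ hb
    simp [hb]
  · simp

lemma W_rigid (blk : Fin l × Fin k ≃ Fin n) : Rigid (W blk) := by
  intro u hodd hu
  refine ⟨u (oddv blk fun _ j => j), ?_⟩
  funext e
  rw [Pi.smul_apply, smul_eq_mul]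
  by_cases he : ∀ i, Odd (e i : ℕ)
  · obtain ⟨γ, rfl⟩ := oddv_exists blk e he
    by_cases hi : ∀ a, Function.Injective (γ a)
    · let π : Fin l → Equiv.Perm (Fin k) := fun a =>
        Equiv.ofBijective (γ a) (Finite.injective_iff_bijective.mp (hi a))
      have h1 := congrFun (W_act blk π) (oddv blk fun _ j => j)
      have h2 := congrFun (hu _ _ (W_act blk π)) (oddv blk fun _ j => j)
      rw [act, oddv_perm] at h1 h2
      have : (fun a j => π a j) = γ := rfl
      simp only [this, Pi.smul_apply, smul_eq_mul, W_oddv_one] at h1 h2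
      rw [h1, h2]; ring
    · push Not at hi
      obtain ⟨a, ha⟩ := hi
      rw [anti_zero blk u hu γ a ha, anti_zero blk (W blk) (fun σ c h => h) γ a ha, mul_zero]
  · have h1 : u e = 0 := by by_contra h; exact he (hodd e h)
    have h2 : W blk e = 0 := by by_contra h; exact he (W_odd blk e h)
    rw [h1, h2, mul_zero]

lemma W_ne_inj (blk : Fin l × Fin k ≃ Fin n) (γ) (h : W blk (oddv blk γ) ≠ 0) (a) :
    Function.Injective (γ a) := by
  by_contra h'
  exact h (anti_zero blk (W blk) (fun σ c h => h) γ a h')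

lemma W_ne_of_inj (blk : Fin l × Fin k ≃ Fin n) (γ) (hi : ∀ a, Function.Injective (γ a)) :
    W blk (oddv blk γ) ≠ 0 := by
  let π : Fin l → Equiv.Perm (Fin k) := fun a =>
    Equiv.ofBijective (γ a) (Finite.injective_iff_bijective.mp (hi a))
  have h1 := congrFun (W_act blk π) (oddv blk fun _ j => j)
  rw [act, oddv_perm] at h1
  have : (fun a j => π a j) = γ := rfl
  simp only [this, Pi.smul_apply, smul_eq_mul, W_oddv_one] at h1
  rw [h1, mul_one, Finset.prod_ne_zero_iff]
  intro a _
  exact_mod_cast (Equiv.Perm.sign (π a)).ne_zero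

lemma sum_odd (k : ℕ) : ∑ c : Fin k, (2 * (c : ℕ) + 1) = k ^ 2 := by
  rw [Fin.sum_univ_eq_sum_range (fun c => 2 * c + 1)]
  induction k with
  | zero => rfl
  | succ k ih => rw [Finset.sum_range_succ, ih]; ring

lemma W_weight (blk : Fin l × Fin k ≃ Fin n) (e) (h : W blk e ≠ 0) :
    ∑ i, (e i : ℕ) = l * k ^ 2 := by
  obtain ⟨γ, rfl⟩ := oddv_exists blk e (W_odd blk e h)
  have hi := W_ne_inj blk γ h
  rw [← Equiv.sum_comp blk, Fintype.sum_prod_type]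
  have : ∀ a, ∑ j, (oddv blk γ (blk (a, j)) : ℕ) = k ^ 2 := by
    intro a
    simp only [oddv_apply]
    rw [← sum_odd k]
    exact (Equiv.ofBijective (γ a) (Finite.injective_iff_bijective.mp (hi a))).sum_comp
      (fun c : Fin k => 2 * (c : ℕ) + 1)
  rw [Finset.sum_congr rfl (fun a _ => this a)]
  simp

end blocks

section lifts
variable {n N : ℕ}

lemma lift_unit (t o : Fin n → Fin N) :
    ∃ U, ∀ w : (Fin n → Fin N) → ℂ, psi w U = Pi.single t (w o) := by
  classical
  have h : ∀ i, ∃ c : Fin N × Fin N → ℂ, ∑ p, c p • (Xm N ^ (p.1:ℕ) * Dm N ^ (p.2:ℕ)) =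
      Matrix.single (t i) (o i) (1:ℂ) := by
    intro i
    exact (Submodule.mem_span_range_iff_exists_fun ℂ).mp (unit_mem (t i) (o i))
  choose c hc using h
  have hk : kron (fun i => Matrix.single (t i) (o i) (1:ℂ)) = Matrix.single t o 1 := by
    ext e e'
    rw [kron_apply]
    by_cases h1 : t = e ∧ o = e'
    · obtain ⟨rfl, rfl⟩ := h1
      simp
    · rw [Matrix.single_apply_of_ne _ _ _ _ _ h1]
      have : ∃ i, ¬ (t i = e i ∧ o i = e' i) := by
        by_contra hc
        push Not at hc
        exact h1 ⟨funext fun i => (hc i).1, funext fun i => (hc i).2⟩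
      obtain ⟨i, hi⟩ := this
      exact Finset.prod_eq_zero (Finset.mem_univ i) (Matrix.single_apply_of_ne _ _ _ _ _ hi)
  have hk2 := kron_sum (Finset.univ) c (fun _ p => Xm N ^ (p.1:ℕ) * Dm N ^ (p.2:ℕ))
  simp only [hc, hk] at hk2
  refine ⟨∑ f ∈ Fintype.piFinset (fun _ : Fin n => (Finset.univ : Finset (Fin N × Fin N))),
    monomial (Finsupp.equivFunOnFinite.symm (Sum.elim (fun i => ((f i).1 : ℕ)) (fun i => ((f i).2 : ℕ))))
      (∏ i, c i (f i)), fun w => ?_⟩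
  have hP : Phi n N (∑ f ∈ Fintype.piFinset (fun _ : Fin n => (Finset.univ : Finset (Fin N × Fin N))),
    monomial (Finsupp.equivFunOnFinite.symm (Sum.elim (fun i => ((f i).1 : ℕ)) (fun i => ((f i).2 : ℕ))))
      (∏ i, c i (f i))) = Matrix.single t o 1 := by
    rw [hk2, map_sum]
    refine Finset.sum_congr rfl (fun f _ => ?_)
    rw [Phi_monomial]
    rfl
  rw [psi_apply, hP]
  ext e
  by_cases he : e = t
  · subst he
    simp [Matrix.mulVec, dotProduct, Matrix.single_apply]
  · rw [Pi.single_eq_of_ne he]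
    simp [Matrix.mulVec, dotProduct, Matrix.single_apply, Ne.symm he]

lemma linInd_diag {ι M : Type*} [AddCommGroup M] [Module ℂ M] (x : ι → M)
    (ℓ : ι → M →ₗ[ℂ] ℂ) (h1 : ∀ i j, ℓ i (x j) ≠ 0 → i = j) (h2 : ∀ i, ℓ i (x i) ≠ 0) :
    LinearIndependent ℂ x := by
  classical
  rw [linearIndependent_iff']
  intro s g hg i hi
  have := congrArg (ℓ i) hg
  rw [map_sum, map_zero, Finset.sum_eq_single i] at this
  · rw [map_smul, smul_eq_mul] at this
    exact (mul_eq_zero.mp this).resolve_right (h2 i)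
  · intro j _ hj
    rw [map_smul, smul_eq_mul]
    by_contra h
    exact hj (h1 i j (right_ne_zero_of_mul h)).symm
  · intro h; exact absurd hi h

lemma mem_low_of {σ : Type*} (Q : Submodule ℂ (MvPolynomial σ ℂ))
    (hQ : ∀ f ∈ Q, ∀ m, homogeneousComponent m f ∈ Q) (f) (hf : f ∈ Q) (L : ℕ)
    (hL : f.totalDegree < L) : f ∈ low (fun m => Q ⊓ HH σ m) L := by
  rw [← sum_homogeneousComponent f]
  refine Submodule.sum_mem _ (fun m hm => ?_)
  refine piece_le (fun m => Q ⊓ HH σ m) (m := m) ?_ ⟨hQ f hf m, homogeneousComponent_mem _ _⟩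
  rw [Finset.mem_range] at hm; omega

lemma rank_ge {σ ι M : Type*} [Finite σ] [Fintype ι] [AddCommGroup M] [Module ℂ M]
    (Q : Submodule ℂ (MvPolynomial σ ℂ))
    (hQ : ∀ f ∈ Q, ∀ m, homogeneousComponent m f ∈ Q) (φ : MvPolynomial σ ℂ →ₗ[ℂ] M)
    (f : ι → MvPolynomial σ ℂ) (hf : ∀ i, f i ∈ Q) (hl : LinearIndependent ℂ (fun i => φ (f i))) :
    ∃ L0, ∀ L ≥ L0, Fintype.card ι ≤ Module.finrank ℂ ((low (fun m => Q ⊓ HH σ m) L).map φ) := by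
  refine ⟨∑ i, (f i).totalDegree + 1, fun L hL => ?_⟩
  have hfd : ∀ m, FiniteDimensional ℂ (Q ⊓ HH σ m : Submodule ℂ (MvPolynomial σ ℂ)) :=
    fun m => Submodule.finiteDimensional_of_le inf_le_right
  have := low_fin (fun m => Q ⊓ HH σ m) L
  have hm : ∀ i, φ (f i) ∈ (low (fun m => Q ⊓ HH σ m) L).map φ := by
    intro i
    refine Submodule.mem_map_of_mem (mem_low_of Q hQ _ (hf i) L ?_)
    have := Finset.single_le_sum (f := fun i => (f i).totalDegree) (fun _ _ => Nat.zero_le _)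
      (Finset.mem_univ i)
    omega
  let g : ι → (low (fun m => Q ⊓ HH σ m) L).map φ := fun i => ⟨φ (f i), hm i⟩
  have hg : LinearIndependent ℂ g := by
    refine LinearIndependent.of_comp ((low (fun m => Q ⊓ HH σ m) L).map φ).subtype ?_
    exact hl
  exact hg.fintype_card_le_finrank

end lifts
end DC

namespace DC
section Qsec
variable {n : ℕ}
/-- parity and weight condition -/
def Good (S : ℤ → Prop) (m : (Fin n ⊕ Fin n) →₀ ℕ) : Prop :=
  (∀ i, Odd (m (Sum.inl i) + m (Sum.inr i))) ∧
    S (∑ i, (m (Sum.inl i) : ℤ) - ∑ i, (m (Sum.inr i) : ℤ))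

lemma good_map (S : ℤ → Prop) (σ : Equiv.Perm (Fin n)) (m : (Fin n ⊕ Fin n) →₀ ℕ) :
    Good S (Finsupp.mapDomain (Sum.map σ σ) m) ↔ Good S m := by
  have h1 : ∀ i, (Finsupp.mapDomain (Sum.map σ σ) m) (Sum.inl (σ i)) = m (Sum.inl i) :=
    fun i => Finsupp.mapDomain_apply (summap_inj σ) m (Sum.inl i)
  have h2 : ∀ i, (Finsupp.mapDomain (Sum.map σ σ) m) (Sum.inr (σ i)) = m (Sum.inr i) :=
    fun i => Finsupp.mapDomain_apply (summap_inj σ) m (Sum.inr i)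
  unfold Good
  rw [← Equiv.sum_comp σ (fun i => ((Finsupp.mapDomain (Sum.map σ σ) m) (Sum.inl i) : ℤ)),
    ← Equiv.sum_comp σ (fun i => ((Finsupp.mapDomain (Sum.map σ σ) m) (Sum.inr i) : ℤ)),
    ← Equiv.forall_congr_right σ]
  simp only [h1, h2]

open Classical in
/-- restrict to good monomials -/
noncomputable def restr (n : ℕ) (S : ℤ → Prop) :
    MvPolynomial (Fin n ⊕ Fin n) ℂ →ₗ[ℂ] MvPolynomial (Fin n ⊕ Fin n) ℂ :=
  (basisMonomials (Fin n ⊕ Fin n) ℂ).constr ℂ (fun m => if Good S m then monomial m 1 else 0)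

open Classical in
lemma restr_monomial (S : ℤ → Prop) (m : (Fin n ⊕ Fin n) →₀ ℕ) (c : ℂ) :
    restr n S (monomial m c) = if Good S m then monomial m c else 0 := by
  have h : (monomial m c : MvPolynomial (Fin n ⊕ Fin n) ℂ) =
      c • basisMonomials (Fin n ⊕ Fin n) ℂ m := by
    rw [coe_basisMonomials, smul_monomial, smul_eq_mul, mul_one]
  rw [h, map_smul, restr, Module.Basis.constr_basis, ← h]
  split_ifs
  · rw [smul_monomial, smul_eq_mul, mul_one]
  · rw [smul_zero]

open Classical in
lemma restr_coeff (S : ℤ → Prop) (f) (m : (Fin n ⊕ Fin n) →₀ ℕ) :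
    coeff m (restr n S f) = if Good S m then coeff m f else 0 := by
  induction f using MvPolynomial.induction_on' with
  | add p q hp hq => rw [map_add, coeff_add, coeff_add, hp, hq]; split_ifs <;> simp
  | monomial u a =>
    rw [restr_monomial]
    by_cases h : u = m
    · subst h
      by_cases hg : Good S u <;> simp [hg]
    · by_cases hg : Good S u <;> simp [hg, coeff_monomial, h]

lemma restr_ren (S : ℤ → Prop) (σ : Equiv.Perm (Fin n)) (f) :
    restr n S (ren σ f) = ren σ (restr n S f) := by
  induction f using MvPolynomial.induction_on' with
  | add p q hp hq => rw [map_add, map_add, map_add, map_add, hp, hq]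
  | monomial u a =>
    rw [rename_monomial, restr_monomial, restr_monomial]
    by_cases hg : Good S u
    · rw [if_pos hg, if_pos ((good_map S σ u).mpr hg), rename_monomial]
    · rw [if_neg hg, if_neg (fun h => hg ((good_map S σ u).mp h)), map_zero]

lemma restr_homog (S : ℤ → Prop) (f) (m : ℕ) (hf : f ∈ HH (Fin n ⊕ Fin n) m) :
    restr n S f ∈ HH (Fin n ⊕ Fin n) m := by
  intro d hd
  rw [restr_coeff] at hd
  split_ifs at hd with h
  · exact hf hd
  · exact absurd rfl hd

/-- The special subspace. -/
noncomputable def Q (S : ℤ → Prop) (i0 : Fin n) : Submodule ℂ (MvPolynomial (Fin n ⊕ Fin n) ℂ) where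
  carrier := {f | restr n S f = f ∧ ∀ σ : Equiv.Perm (Fin n), σ i0 = i0 → ren σ f = f}
  add_mem' := by
    rintro f g ⟨h1, h2⟩ ⟨h3, h4⟩
    exact ⟨by rw [map_add, h1, h3], fun σ hσ => by rw [map_add, h2 σ hσ, h4 σ hσ]⟩
  zero_mem' := ⟨map_zero _, fun σ _ => map_zero _⟩
  smul_mem' := by
    rintro c f ⟨h1, h2⟩
    exact ⟨by rw [map_smul, h1], fun σ hσ => by rw [map_smul, h2 σ hσ]⟩

lemma Q_good (S : ℤ → Prop) (i0 : Fin n) (f) (hf : f ∈ Q S i0) (m) (hm : m ∈ f.support) : Good S m := by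
  by_contra h
  rw [mem_support_iff, ← hf.1, restr_coeff, if_neg h] at hm
  exact hm rfl

lemma Q_homog (S : ℤ → Prop) (i0 : Fin n) (f) (hf : f ∈ Q S i0) (m : ℕ) :
    homogeneousComponent m f ∈ Q S i0 := by
  refine ⟨?_, fun σ hσ => by rw [← ren_homog, hf.2 σ hσ]⟩
  ext d
  rw [restr_coeff]
  split_ifs with h
  · rfl
  · rw [coeff_homogeneousComponent]
    have := Q_good S i0 f hf d
    rw [mem_support_iff] at this
    by_cases hd : coeff d f = 0
    · simp [hd]
    · exact absurd (this hd) h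

/-- stabilizer -/
noncomputable instance stabFin (i0 : Fin n) : Fintype (MulAction.stabilizer (Equiv.Perm (Fin n)) i0) :=
  Fintype.ofFinite _

lemma stab_iff (i0 : Fin n) (σ : Equiv.Perm (Fin n)) :
    σ ∈ MulAction.stabilizer (Equiv.Perm (Fin n)) i0 ↔ σ i0 = i0 := Iff.rfl

lemma ren_mul (σ τ : Equiv.Perm (Fin n)) (f) : ren σ (ren τ f) = ren (σ * τ) f := by
  rw [rename_rename]
  congr 2
  funext j
  rcases j with i | i <;> rfl

/-- symmetrization -/
noncomputable def symm (i0 : Fin n) : MvPolynomial (Fin n ⊕ Fin n) ℂ →ₗ[ℂ] MvPolynomial (Fin n ⊕ Fin n) ℂ :=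
  ∑ σ : MulAction.stabilizer (Equiv.Perm (Fin n)) i0, (ren σ.1).toLinearMap

lemma symm_apply (i0 : Fin n) (f) : symm i0 f =
    ∑ σ : MulAction.stabilizer (Equiv.Perm (Fin n)) i0, ren σ.1 f := by
  simp [symm]

lemma proj_mem (S : ℤ → Prop) (i0 : Fin n) (f) : restr n S (symm i0 f) ∈ Q S i0 := by
  constructor
  · ext d
    rw [restr_coeff]
    split_ifs with h
    · rfl
    · rw [restr_coeff, if_neg h]
  · intro τ hτ
    rw [← restr_ren]
    congr 1
    rw [symm_apply, map_sum]
    simp only [ren_mul]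
    exact Equiv.sum_comp (Equiv.mulLeft (⟨τ, hτ⟩ : MulAction.stabilizer (Equiv.Perm (Fin n)) i0))
      (fun σ => ren σ.1 f)

lemma proj_self (S : ℤ → Prop) (i0 : Fin n) (f) (hf : f ∈ Q S i0) : restr n S (symm i0 f) =
    (Fintype.card (MulAction.stabilizer (Equiv.Perm (Fin n)) i0) : ℂ) • f := by
  rw [symm_apply, Finset.sum_congr rfl (fun σ _ => hf.2 σ.1 σ.2), Finset.sum_const, map_nsmul, hf.1,
    Finset.card_univ, Nat.cast_smul_eq_nsmul]

variable {N : ℕ}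

open Classical in
lemma psi_restr (S : ℤ → Prop) (w : (Fin n → Fin N) → ℂ) (hw : OddSupp w) (h : ℕ)
    (hh : ∀ e, w e ≠ 0 → ∑ i, (e i : ℕ) = h) (f) (e) :
    psi w (restr n S f) e = if (∀ i, Even (e i : ℕ)) ∧ S (∑ i, ((e i : ℕ) : ℤ) - h) then
      psi w f e else 0 := by
  induction f using MvPolynomial.induction_on' with
  | add p q hp hq =>
    rw [map_add, map_add, map_add, Pi.add_apply, Pi.add_apply, hp, hq]; split_ifs <;> simp
  | monomial m c =>
    by_cases hz : psi w (monomial m c) e = 0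
    · rw [hz, ite_self, restr_monomial]
      split_ifs
      · exact hz
      · simp
    · obtain ⟨e', h1, s, hs, h2⟩ := psi_supp w _ e hz
      have hs' : s = m := by
        have := support_monomial_subset hs
        simpa using this
      subst hs'
      have key : Good S s ↔ (∀ i, Even (e i : ℕ)) ∧ S (∑ i, ((e i : ℕ) : ℤ) - h) := by
        unfold Good
        have a : ∀ i, Odd (s (Sum.inl i) + s (Sum.inr i)) ↔ Even (e i : ℕ) := by
          intro i
          have b := hw e' h1 i
          have c := h2 i
          rw [Nat.odd_iff] at b ⊢
          rw [Nat.even_iff]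
          omega
        have b : (∑ i, (s (Sum.inl i) : ℤ) - ∑ i, (s (Sum.inr i) : ℤ)) =
            ∑ i, ((e i : ℕ) : ℤ) - h := by
          rw [← hh e' h1, Nat.cast_sum, sub_eq_sub_iff_add_eq_add, ← Finset.sum_add_distrib,
            ← Finset.sum_add_distrib]
          refine Finset.sum_congr rfl (fun i _ => ?_)
          have := h2 i
          omega
        rw [b, forall_congr' a]
      rw [restr_monomial]
      by_cases hg : Good S s
      · rw [if_pos hg, if_pos (key.mp hg)]
      · rw [if_neg hg, if_neg (fun h => hg (key.mpr h)), map_zero]; rfl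

lemma act_act (σ τ : Equiv.Perm (Fin n)) (T : (Fin n → Fin N) → ℂ) :
    act σ (act τ T) = act (σ * τ) T := rfl

lemma psi_ren' (σ : Equiv.Perm (Fin n)) (w : (Fin n → Fin N) → ℂ) (f) :
    psi w (ren σ f) = act σ (psi (act σ⁻¹ w) f) := by
  rw [← psi_ren, act_act, mul_inv_cancel]; rfl

/-- the translates of `w` -/
def orb (w : (Fin n → Fin N) → ℂ) : Equiv.Perm (Fin n) → (Fin n → Fin N) → ℂ := fun g => act g w

lemma act_weight (w : (Fin n → Fin N) → ℂ) (h : ℕ)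
    (hh : ∀ e, w e ≠ 0 → ∑ i, (e i : ℕ) = h) (g : Equiv.Perm (Fin n)) (e) (he : act g w e ≠ 0) :
    ∑ i, (e i : ℕ) = h := by
  rw [← hh _ he]
  exact (Equiv.sum_comp g (fun i => (e i : ℕ))).symm

lemma ker_proj (S : ℤ → Prop) (i0 : Fin n) (w : (Fin n → Fin N) → ℂ) (hw : OddSupp w) (h : ℕ)
    (hh : ∀ e, w e ≠ 0 → ∑ i, (e i : ℕ) = h) (f) (hf : phi (orb w) f = 0) :
    phi (orb w) (restr n S (symm i0 f)) = 0 := by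
  funext g
  funext e
  rw [phi_apply, psi_restr S (orb w g) (oddSupp_act g w hw) h (act_weight w h hh g)]
  have : psi (orb w g) (symm i0 f) = 0 := by
    rw [symm_apply, map_sum]
    refine Finset.sum_eq_zero (fun σ _ => ?_)
    rw [psi_ren']
    have h1 : psi (act σ.1⁻¹ (orb w g)) f = 0 := congrFun hf (σ.1⁻¹ * g)
    rw [h1]; rfl
  rw [this]; simp

lemma stab_lead (S : ℤ → Prop) (i0 : Fin n) (w : (Fin n → Fin N) → ℂ) (hw : OddSupp w) (h : ℕ)
    (hh : ∀ e, w e ≠ 0 → ∑ i, (e i : ℕ) = h) (m : ℕ) :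
    (Q S i0 ⊓ HH (Fin n ⊕ Fin n) m) ⊓ lead (HH (Fin n ⊕ Fin n)) (phi (orb w)) m ≤
      lead (fun m => Q S i0 ⊓ HH (Fin n ⊕ Fin n) m) (phi (orb w)) m := by
  rintro f ⟨hf, -, g, hg, hgf⟩
  refine ⟨hf, ?_⟩
  set c : ℂ := (Fintype.card (MulAction.stabilizer (Equiv.Perm (Fin n)) i0) : ℂ) with hc
  have hc0 : c ≠ 0 := by
    rw [hc]; exact_mod_cast Fintype.card_ne_zero
  refine ⟨c⁻¹ • restr n S (symm i0 g), ?_, ?_⟩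
  · refine Submodule.smul_mem _ _ ?_
    have gen : ∀ m, ∀ a ∈ low (HH (Fin n ⊕ Fin n)) m, restr n S (symm i0 a) ∈
      low (fun m => Q S i0 ⊓ HH (Fin n ⊕ Fin n) m) m := by
      intro m
      induction m with
      | zero =>
        intro a ha
        have : a = 0 := ha
        rw [this, map_zero, map_zero]; exact Submodule.zero_mem _
      | succ m ih =>
        intro f hf
        obtain ⟨a, ha, b, hb, rfl⟩ := Submodule.mem_sup.mp hf
        rw [map_add, map_add]
        refine Submodule.add_mem _ (low_le _ (Nat.le_succ _) (ih a ha)) ?_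
        refine piece_le (fun m => Q S i0 ⊓ HH (Fin n ⊕ Fin n) m) (Nat.lt_succ_self m) ?_
        refine ⟨proj_mem _ _ _, restr_homog _ _ _ ?_⟩
        rw [symm_apply]
        exact Submodule.sum_mem _ (fun σ _ => IsHomogeneous.rename_isHomogeneous hb)
    exact gen m g hg
  · have h1 : phi (orb w) (restr n S (symm i0 (g - f))) = 0 := by
      apply ker_proj S i0 w hw h hh
      rw [map_sub, hgf, sub_self]
    rw [map_sub, map_sub, proj_self S i0 f hf.1, map_sub, sub_eq_zero] at h1
    rw [map_smul, h1, map_smul, ← hc, smul_smul, inv_mul_cancel₀ hc0, one_smul]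

end Qsec
end DC

namespace DC
section M1
variable {n : ℕ}

/-- one block -/
def blk1 (n : ℕ) : Fin 1 × Fin n ≃ Fin n := Equiv.uniqueProd (Fin n) (Fin 1)

lemma blk1_apply (a) (j : Fin n) : blk1 n (a, j) = j := rfl

lemma W1_act (σ : Equiv.Perm (Fin n)) :
    act σ (W (blk1 n)) = ((Equiv.Perm.sign σ : ℤ) : ℂ) • W (blk1 n) := by
  have h := W_act (blk1 n) (fun _ => σ)
  have h2 : bperm (blk1 n) (fun _ => σ) = σ := by
    ext j
    rw [← blk1_apply 0 j, bperm_apply]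
    rfl
  rw [h2] at h
  simpa using h

/-- first index set -/
abbrev Idx1 (n : ℕ) (S : ℤ → Prop) :=
  {x : Fin (n+1) × Fin (n+1) × Fin (n+1) // x.1 < x.2.1 ∧
    S ((n : ℤ) - 2 * (x.1 : ℕ) - 2 * (x.2.1 : ℕ) + 2 * (x.2.2 : ℕ))}

/-- shape condition -/
def Shape (i0 : Fin n) (x : Fin (n+1) × Fin (n+1) × Fin (n+1)) (e : Fin n → Fin (2 * n + 1)) : Prop :=
  (e i0 : ℕ) = 2 * (x.2.2 : ℕ) ∧ ∀ y : Fin (n+1), (∃ i, i ≠ i0 ∧ (e i : ℕ) = 2 * (y : ℕ)) ↔ y ≠ x.1 ∧ y ≠ x.2.1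

lemma psi_Q (S : ℤ → Prop) (i0 : Fin n) (f) (hf : f ∈ Q S i0) (σ : Equiv.Perm (Fin n)) (hσ : σ i0 = i0)
    (e : Fin n → Fin (2 * n + 1)) :
    psi (W (blk1 n)) f (e ∘ σ) = ((Equiv.Perm.sign σ : ℤ) : ℂ) * psi (W (blk1 n)) f e := by
  have h := psi_ren σ (W (blk1 n)) f
  rw [hf.2 σ hσ, W1_act, psi_smul] at h
  have := congrFun h e
  rw [Pi.smul_apply, smul_eq_mul] at this
  exact this.symm

lemma psi_Q_inj (S : ℤ → Prop) (i0 : Fin n) (f) (hf : f ∈ Q S i0) (e : Fin n → Fin (2 * n + 1))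
    (he : psi (W (blk1 n)) f e ≠ 0) (i j : Fin n) (hi : i ≠ i0) (hj : j ≠ i0) (hij : e i = e j) : i = j := by
  by_contra hne
  have h := psi_Q S i0 f hf (Equiv.swap i j) (Equiv.swap_apply_of_ne_of_ne hi.symm hj.symm) e
  have h2 : e ∘ (Equiv.swap i j) = e := by
    funext l
    rw [Function.comp_apply]
    by_cases h1 : l = i
    · rw [h1, Equiv.swap_apply_left, hij]
    · by_cases h2 : l = j
      · rw [h2, Equiv.swap_apply_right, hij]
      · rw [Equiv.swap_apply_of_ne_of_ne h1 h2]
  rw [h2, Equiv.Perm.sign_swap hne] at h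
  simp only [Units.val_neg, Units.val_one, Int.cast_neg, Int.cast_one] at h
  apply he
  linear_combination h / 2

lemma rearr {α : Type*} (i0 : Fin n) (e e' : Fin n → α) (h0 : e i0 = e' i0)
    (hinj : ∀ i j, i ≠ i0 → j ≠ i0 → e i = e j → i = j) (h : ∀ i, i ≠ i0 → ∃ j, j ≠ i0 ∧ e' j = e i) :
    ∃ σ : Equiv.Perm (Fin n), σ i0 = i0 ∧ e = e' ∘ σ := by
  classical
  choose g hg1 hg2 using h
  let s : Fin n → Fin n := fun i => if hi : i = i0 then i0 else g i hi
  have s0 : s i0 = i0 := by simp [s]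
  have s1 : ∀ i (hi : i ≠ i0), s i = g i hi := fun i hi => by simp [s, hi]
  have hs : Function.Injective s := by
    intro i j hij
    by_cases hi : i = i0
    · by_cases hj : j = i0
      · rw [hi, hj]
      · rw [hi, s0, s1 j hj] at hij
        exact absurd hij.symm (hg1 j hj)
    · by_cases hj : j = i0
      · rw [hj, s0, s1 i hi] at hij
        exact absurd hij (hg1 i hi)
      · rw [s1 i hi, s1 j hj] at hij
        apply hinj i j hi hj
        rw [← hg2 i hi, ← hg2 j hj, hij]
  refine ⟨Equiv.ofBijective s (Finite.injective_iff_bijective.mp hs), s0, ?_⟩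
  funext i
  change e i = e' (s i)
  by_cases hi : i = i0
  · rw [hi, s0, h0]
  · rw [s1 i hi, hg2]

lemma exists_shape (S : ℤ → Prop) (i0 : Fin n) (f) (hf : f ∈ Q S i0) (e : Fin n → Fin (2 * n + 1))
    (he : psi (W (blk1 n)) f e ≠ 0) : ∃ x : Idx1 n S, Shape i0 x.1 e := by
  classical
  have h := psi_restr S (W (blk1 n)) (W_odd _) _ (W_weight (blk1 n)) f e
  rw [hf.1] at h
  split_ifs at h with hc
  swap
  · exact absurd h he
  obtain ⟨hev, hS⟩ := hc
  choose g hg using hev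
  let ε : Fin n → Fin (n+1) := fun i => ⟨g i, by have := hg i; have := (e i).isLt; omega⟩
  have hε : ∀ i, (e i : ℕ) = 2 * (ε i : ℕ) := fun i => by
    have := hg i
    change (e i : ℕ) = 2 * g i
    omega
  let A := (Finset.univ.erase i0).image ε
  have hinj : Set.InjOn ε (Finset.univ.erase i0 : Finset (Fin n)) := by
    intro i hi j hj hij
    simp only [Finset.coe_erase, Finset.coe_univ, Set.mem_sdiff, Set.mem_univ, true_and,
      Set.mem_singleton_iff] at hi hj
    refine psi_Q_inj S i0 f hf e he i j hi hj (Fin.ext ?_)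
    rw [hε, hε, hij]
  have hA : A.card = n - 1 := by
    rw [Finset.card_image_of_injOn hinj, Finset.card_erase_of_mem (Finset.mem_univ _)]
    simp
  have hAc : Aᶜ.card = 2 := by
    rw [Finset.card_compl, hA, Fintype.card_fin]
    have := i0.pos
    omega
  obtain ⟨q, r, hqr, hAqr⟩ : ∃ q r, q < r ∧ Aᶜ = {q, r} := by
    obtain ⟨q, r, hne, h⟩ := Finset.card_eq_two.mp hAc
    rcases lt_or_gt_of_ne hne with h1 | h1
    · exact ⟨q, r, h1, h⟩
    · exact ⟨r, q, h1, by rw [h, Finset.pair_comm]⟩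
  have hsum : ∑ i, ((e i : ℕ) : ℤ) = n * (n + 1) - 2 * (q : ℕ) - 2 * (r : ℕ) + 2 * (ε i0 : ℕ) := by
    have h1 : ∑ i, ((ε i : ℕ) : ℤ) = (ε i0 : ℕ) + ∑ y ∈ A, ((y : ℕ) : ℤ) := by
      rw [Finset.sum_image hinj, Finset.add_sum_erase _ (fun i => ((ε i : ℕ) : ℤ)) (Finset.mem_univ i0)]
    have h2 := Finset.sum_add_sum_compl A (fun y => ((y : ℕ) : ℤ))
    rw [hAqr, Finset.sum_pair hqr.ne] at h2
    have h3 : 2 * ∑ y : Fin (n+1), ((y : ℕ) : ℤ) = n * (n + 1) := by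
      rw [Fin.sum_univ_eq_sum_range (fun c => (c : ℤ))]
      have := Finset.sum_range_id_mul_two (n+1)
      zify at this
      rw [mul_comm, this, Nat.add_sub_cancel]; ring
    simp only [hε]
    push_cast
    rw [← Finset.mul_sum]
    linear_combination 2 * h1 + 2 * h2 + h3
  refine ⟨⟨(q, r, ε i0), hqr, ?_⟩, hε i0, fun y => ?_⟩
  · rw [hsum] at hS
    convert hS using 1
    push_cast
    ring
  · have hy : y ∈ A ↔ y ≠ q ∧ y ≠ r := by
      have : y ∈ Aᶜ ↔ y = q ∨ y = r := by rw [hAqr]; simp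
      rw [Finset.mem_compl] at this
      tauto
    rw [← hy]
    simp only [A, Finset.mem_image, Finset.mem_erase, Finset.mem_univ, and_true]
    refine exists_congr (fun i => and_congr_right (fun _ => ?_))
    rw [hε, Fin.ext_iff]
    omega

/-- the map to the one block module -/
noncomputable abbrev phi1 (n : ℕ) := phi (fun _ : Unit => act 1 (W (blk1 n)))

lemma low_le_Q (S : ℤ → Prop) (i0 : Fin n) (L : ℕ) : low (fun m => Q S i0 ⊓ HH (Fin n ⊕ Fin n) m) L ≤ Q S i0 := by
  induction L with
  | zero => exact bot_le
  | succ L ih => exact sup_le ih inf_le_left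

lemma M1_upper (S : ℤ → Prop) [DecidablePred S] (i0 : Fin n) (L : ℕ) :
    Module.finrank ℂ ((low (fun m => Q S i0 ⊓ HH (Fin n ⊕ Fin n) m) L).map (phi1 n)) ≤
      Fintype.card (Idx1 n S) := by
  classical
  set V := (low (fun m => Q S i0 ⊓ HH (Fin n ⊕ Fin n) m) L).map (phi1 n)
  let tt : Idx1 n S → (Fin n → Fin (2 * n + 1)) := fun x =>
    if h : ∃ e, Shape i0 x.1 e then h.choose else fun _ => 0
  have htt : ∀ x e, Shape i0 x.1 e → Shape i0 x.1 (tt x) := by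
    intro x e he
    have h : ∃ e, Shape i0 x.1 e := ⟨e, he⟩
    simp only [tt, dif_pos h]
    exact h.choose_spec
  let ev : V →ₗ[ℂ] (Idx1 n S → ℂ) :=
    { toFun := fun F x => F.1 () (tt x)
      map_add' := fun _ _ => rfl
      map_smul' := fun _ _ => rfl }
  have hinj : Function.Injective ev := by
    rw [← LinearMap.ker_eq_bot, LinearMap.ker_eq_bot']
    rintro ⟨F, f, hf, rfl⟩ hF
    have hfQ := low_le_Q S i0 L hf
    apply Subtype.ext
    funext u e
    change psi (W (blk1 n)) f e = 0
    by_contra he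
    obtain ⟨x, hx⟩ := exists_shape S i0 f hfQ e he
    have ht := htt x e hx
    obtain ⟨σ, hσ, heσ⟩ := rearr i0 e (tt x) (Fin.ext (hx.1.trans ht.1.symm))
      (psi_Q_inj S i0 f hfQ e he) (by
        intro i hi
        have hev : Even (e i : ℕ) := by
          have h := psi_restr S (W (blk1 n)) (W_odd _) _ (W_weight (blk1 n)) f e
          rw [hfQ.1] at h
          split_ifs at h with hc
          · exact hc.1 i
          · exact absurd h he
        obtain ⟨g, hg⟩ := hev
        have hg' : g < n + 1 := by have := (e i).isLt; omega
        have h1 := (hx.2 ⟨g, hg'⟩).mp ⟨i, hi, by simp only; omega⟩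
        obtain ⟨j, hj, hj'⟩ := (ht.2 ⟨g, hg'⟩).mpr h1
        exact ⟨j, hj, Fin.ext (by simp only at hj'; omega)⟩)
    apply he
    have h0 : psi (W (blk1 n)) f (tt x) = 0 := congrFun hF x
    rw [heσ, psi_Q S i0 f hfQ σ hσ, h0, mul_zero]
  have := LinearMap.finrank_le_finrank_of_injective hinj
  rwa [Module.finrank_fintype_fun_eq_card] at this

/-- evaluation functional -/
def evl {ι E : Type*} (g : ι) (t : E) : (ι → E → ℂ) →ₗ[ℂ] ℂ where
  toFun F := F g t
  map_add' _ _ := rfl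
  map_smul' _ _ := rfl

lemma M1_lower (n : ℕ) : ∃ L0, ∀ L ≥ L0, (2 * n + 1) ^ n ≤
    Module.finrank ℂ ((low (HH (Fin n ⊕ Fin n)) L).map (phi1 n)) := by
  choose U hU using fun t : Fin n → Fin (2 * n + 1) => lift_unit t (oddv (blk1 n) fun _ j => j)
  have hval : ∀ t, phi1 n (U t) () = Pi.single t 1 := by
    intro t
    change psi (W (blk1 n)) (U t) = _
    rw [hU, W_oddv_one]
  have hl : LinearIndependent ℂ (fun t => phi1 n (U t)) := by
    refine linInd_diag _ (fun t => evl () t) ?_ ?_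
    · intro i j h
      by_contra hne
      apply h
      change phi1 n (U j) () i = 0
      rw [hval, Pi.single_eq_of_ne hne]
    · intro i
      change phi1 n (U i) () i ≠ 0
      rw [hval, Pi.single_eq_same]
      exact one_ne_zero
  obtain ⟨L0, h⟩ := rank_ge ⊤ (fun _ _ _ => trivial) (phi1 n) U (fun _ => trivial) hl
  refine ⟨L0, fun L hL => ?_⟩
  have := h L hL
  have e : (fun m => (⊤ : Submodule ℂ (MvPolynomial (Fin n ⊕ Fin n) ℂ)) ⊓ HH (Fin n ⊕ Fin n) m) =
      HH (Fin n ⊕ Fin n) := funext (fun m => top_inf_eq _)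
  rw [e] at this
  simpa only [Fintype.card_fun, Fintype.card_fin] using this

end M1
end DC

namespace DC
section M2
variable {k : ℕ}

/-- two blocks -/
def blk2 (k : ℕ) : Fin 2 × Fin k ≃ Fin (2 * k) := finProdFinEquiv

/-- special position -/
def pos0 (k : ℕ) : Fin (2 * (k + 1)) := blk2 (k+1) (1, 0)

/-- second index set -/
abbrev Idx2 (k : ℕ) (S : ℤ → Prop) :=
  {x : Fin (k+1) × Fin (k+1) × Fin (k+1) × Fin (k+1) // x.2.1 < x.2.2.1 ∧ x.2.1 ≤ x.1 ∧
    S (2 * (k : ℤ) - 2 * ((x.1 : ℕ) + (x.2.1 : ℕ) + (x.2.2.1 : ℕ)) + 2 * (x.2.2.2 : ℕ))}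

lemma exists_tau (p q r s : Fin (k+2)) (hqr : q < r) :
    ∃ τ : Fin (2 * (k+1)) → Fin (k+2),
      (∀ F : Fin (k+2) → ℤ, ∑ i, F (τ i) = 2 * ∑ y, F y - F p - F q - F r + F s) ∧
      τ (pos0 k) = s ∧ (∀ j, τ (blk2 (k+1) (0, j)) = p.succAbove j) ∧
      (∀ j, j ≠ 0 → τ (blk2 (k+1) (1, j)) ≠ q ∧ τ (blk2 (k+1) (1, j)) ≠ r) ∧
      (∀ j j', j ≠ 0 → j' ≠ 0 → τ (blk2 (k+1) (1, j)) = τ (blk2 (k+1) (1, j')) → j = j') := by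
  obtain ⟨q0, hq0⟩ := Fin.exists_succAbove_eq hqr.ne
  let γ : Fin 2 → Fin (k+1) → Fin (k+2) := ![fun j => p.succAbove j,
    Fin.cons s (fun j => r.succAbove (q0.succAbove j))]
  have g0 : ∀ j, γ 0 j = p.succAbove j := fun j => rfl
  have g1 : γ 1 0 = s := rfl
  have g2 : ∀ j : Fin k, γ 1 j.succ = r.succAbove (q0.succAbove j) := fun j => rfl
  refine ⟨fun i => γ ((blk2 (k+1)).symm i).1 ((blk2 (k+1)).symm i).2, ?_, ?_, ?_, ?_, ?_⟩
  · intro F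
    rw [← Equiv.sum_comp (blk2 (k+1)), Fintype.sum_prod_type, Fin.sum_univ_two]
    simp only [Equiv.symm_apply_apply]
    rw [Fin.sum_univ_succ (fun j => F (γ 1 j))]
    simp only [g0, g1, g2]
    have h1 := Fin.sum_univ_succAbove F p
    have h2 := Fin.sum_univ_succAbove F r
    have h3 := Fin.sum_univ_succAbove (fun j => F (r.succAbove j)) q0
    rw [hq0] at h3
    linear_combination - h1 - h2 - h3
  · simp [pos0, g1]
  · intro j; simp [g0]
  · intro j hj
    obtain ⟨j, rfl⟩ := Fin.exists_succ_eq.mpr hj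
    simp only [Equiv.symm_apply_apply, g2]
    refine ⟨?_, Fin.succAbove_ne _ _⟩
    rw [← hq0]
    intro h
    exact Fin.succAbove_ne _ _ (Fin.succAbove_right_injective h)
  · intro j j' hj hj'
    obtain ⟨j, rfl⟩ := Fin.exists_succ_eq.mpr hj
    obtain ⟨j', rfl⟩ := Fin.exists_succ_eq.mpr hj'
    simp only [Equiv.symm_apply_apply, g2]
    intro h
    rw [Fin.succAbove_right_injective (Fin.succAbove_right_injective h)]

lemma exists_alpha (p q : Fin (k+2)) : ∃ α : Fin (k+2) → Fin (k+1),
    (∀ x y, x ≠ p → y ≠ p → α x = α y → x = y) ∧ (α p = α q) ∧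
    (∀ x y, x ≠ q → y ≠ q → α x = α y → x = y) := by
  have h : ∀ x, ∃ z : Fin (k+1), x ≠ p → p.succAbove z = x := by
    intro x
    by_cases hx : x = p
    · exact ⟨0, fun h => absurd hx h⟩
    · obtain ⟨z, hz⟩ := Fin.exists_succAbove_eq hx
      exact ⟨z, fun _ => hz⟩
  choose g hg using h
  have hp : ∀ x y, x ≠ p → y ≠ p → (Function.update g p (g q)) x = (Function.update g p (g q)) y → x = y := by
    intro x y hx hy h
    rw [Function.update_of_ne hx, Function.update_of_ne hy] at h
    rw [← hg x hx, ← hg y hy, h]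
  have hpq : (Function.update g p (g q)) p = (Function.update g p (g q)) q := by
    by_cases h : q = p
    · rw [h]
    · rw [Function.update_self, Function.update_of_ne h]
  refine ⟨Function.update g p (g q), hp, hpq, ?_⟩
  intro x y hx hy h
  by_cases h1 : q = p
  · subst h1
    exact hp x y hx hy h
  by_cases hx' : x = p
  · by_cases hy' : y = p
    · rw [hx', hy']
    · rw [hx', hpq] at h
      exact absurd (hp q y h1 hy' h).symm hy
  · by_cases hy' : y = p
    · rw [hy', hpq] at h
      exact absurd (hp x q hx' h1 h) hx
    · exact hp x y hx' hy' h

/-- odd and even vectors -/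
def oddp {n : ℕ} (β : Fin n → Fin (k+1)) (i : Fin n) : Fin (2 * (k+1) + 1) :=
  ⟨2 * (β i : ℕ) + 1, by have := (β i).isLt; omega⟩

/-- even vectors -/
def evp {n : ℕ} (τ : Fin n → Fin (k+2)) (i : Fin n) : Fin (2 * (k+1) + 1) :=
  ⟨2 * (τ i : ℕ), by have := (τ i).isLt; omega⟩

lemma oddp_eq (β : Fin (2 * (k+1)) → Fin (k+1)) :
    oddp β = oddv (blk2 (k+1)) (fun a j => β (blk2 (k+1) (a, j))) := by
  funext i
  obtain ⟨⟨a, j⟩, rfl⟩ := (blk2 (k+1)).surjective i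
  apply Fin.ext
  rw [oddv_apply]
  rfl

lemma evp_comp {n : ℕ} (τ τ' : Fin n → Fin (k+2)) (σ : Equiv.Perm (Fin n))
    (h : evp τ' ∘ σ = evp τ) (i) : τ' (σ i) = τ i := by
  have := congrArg Fin.val (congrFun h i)
  simp only [evp, Function.comp_apply] at this
  exact Fin.ext (by omega)

lemma min_lemma {N : ℕ} (p q r p' q' r' : Fin N) (h1 : q < r) (h2 : q ≤ p) (h1' : q' < r')
    (h2' : q' ≤ p') (hF : ∀ F : Fin N → ℤ, F p + F q + F r = F p' + F q' + F r') : q' = q := by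
  have a := hF (fun y => if y = q then 1 else 0)
  have b := hF (fun y => if y = q' then 1 else 0)
  clear hF
  grind

lemma triple_lemma (p q r p' q' r' : Fin (k+2)) (h1 : q < r) (h2 : q ≤ p) (h1' : q' < r')
    (h2' : q' ≤ p') (hF : ∀ F : Fin (k+2) → ℤ, F p + F q + F r = F p' + F q' + F r')
    (hp : p = q ∨ p' = p ∨ p' = q) : p' = p ∧ q' = q ∧ r' = r := by
  have hm := min_lemma p q r p' q' r' h1 h2 h1' h2' hF
  subst hm
  have hG : ∀ F : Fin (k+2) → ℤ, F p + F r = F p' + F r' := fun F => by linarith [hF F]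
  have hpp : p' = p := by
    have a := hG (fun y => if y = p then 1 else 0)
    have b := hG (fun y => if y = p' then 1 else 0)
    clear hF hG
    grind
  subst hpp
  refine ⟨rfl, rfl, ?_⟩
  have a := hG (fun y => if y = r then 1 else 0)
  clear hF hG
  grind

/-- the map to the two block module -/
noncomputable abbrev phi2 (k : ℕ) := phi (orb (W (blk2 k)))

lemma psi_symm_unit {n N : ℕ} (i0 : Fin n) (w : (Fin n → Fin N) → ℂ) (t o : Fin n → Fin N) (U)
    (hU : ∀ w : (Fin n → Fin N) → ℂ, psi w U = Pi.single t (w o)) (e) :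
    psi w (symm i0 U) e = ∑ σ : MulAction.stabilizer (Equiv.Perm (Fin n)) i0,
      (Pi.single t (w (o ∘ (σ.1⁻¹ : Equiv.Perm (Fin n)))) : (Fin n → Fin N) → ℂ) (e ∘ σ.1) := by
  rw [symm_apply, map_sum, Finset.sum_apply]
  refine Finset.sum_congr rfl (fun σ _ => ?_)
  rw [psi_ren', hU]
  rfl

lemma M2_lower (k : ℕ) (S : ℤ → Prop) [DecidablePred S] : ∃ L0, ∀ L ≥ L0,
    Fintype.card (Idx2 (k+1) S) ≤ Module.finrank ℂ
      ((low (fun m => Q S (pos0 k) ⊓ HH (Fin (2 * (k+1)) ⊕ Fin (2 * (k+1))) m) L).map (phi2 (k+1))) := by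
  classical
  choose τ τsum τs τ0 τ1 τinj using fun x : Idx2 (k+1) S =>
    exists_tau x.1.1 x.1.2.1 x.1.2.2.1 x.1.2.2.2 x.2.1
  choose α αp αpq αq using fun x : Idx2 (k+1) S => exists_alpha x.1.1 x.1.2.1
  let β : Idx2 (k+1) S → Fin (2 * (k+1)) → Fin (k+1) := fun x i =>
    if i = pos0 k then α x (x.1.2.2.1) else α x (τ x i)
  have β0 : ∀ x, β x (pos0 k) = α x (x.1.2.2.1) := fun x => if_pos rfl
  have β1 : ∀ x i, i ≠ pos0 k → β x i = α x (τ x i) := fun x i hi => if_neg hi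
  choose U hU using fun x : Idx2 (k+1) S => lift_unit (evp (τ x)) (oddp (β x))
  have blkne : ∀ a j, (a, j) ≠ ((1 : Fin 2), (0 : Fin (k+1))) → blk2 (k+1) (a, j) ≠ pos0 k := by
    intro a j h h'
    exact h ((blk2 (k+1)).injective h')
  -- nonvanishing of the reference value
  have hW : ∀ x, W (blk2 (k+1)) (oddp (β x)) ≠ 0 := by
    intro x
    rw [oddp_eq]
    apply W_ne_of_inj
    intro a j j' h
    fin_cases a
    · simp only [Fin.zero_eta] at h
      rw [β1 x _ (blkne _ _ (by simp)), β1 x _ (blkne _ _ (by simp)), τ0, τ0] at h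
      exact Fin.succAbove_right_injective (αp x _ _ (Fin.succAbove_ne _ _) (Fin.succAbove_ne _ _) h)
    · simp only [Fin.mk_one] at h
      have hrq : x.1.2.2.1 ≠ x.1.2.1 := x.2.1.ne'
      by_cases hj : j = 0
      · by_cases hj' : j' = 0
        · rw [hj, hj']
        · subst hj
          have e0 : β x (blk2 (k+1) (1, 0)) = α x (x.1.2.2.1) := β0 x
          rw [e0, β1 x _ (blkne _ _ (by simp [hj']))] at h
          have := αq x _ _ hrq (τ1 x j' hj').1 h
          exact absurd this.symm (τ1 x j' hj').2
      · by_cases hj' : j' = 0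
        · subst hj'
          have e0 : β x (blk2 (k+1) (1, 0)) = α x (x.1.2.2.1) := β0 x
          rw [e0, β1 x _ (blkne _ _ (by simp [hj]))] at h
          have := αq x _ _ (τ1 x j hj).1 hrq h
          exact absurd this (τ1 x j hj).2
        · rw [β1 x _ (blkne _ _ (by simp [hj])), β1 x _ (blkne _ _ (by simp [hj']))] at h
          exact τinj x j j' hj hj' (αq x _ _ (τ1 x j hj).1 (τ1 x j' hj').1 h)
  -- coordinates
  have hcoord : ∀ x' x, evl (1 : Equiv.Perm (Fin (2 * (k+1)))) (evp (τ x'))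
      (phi2 (k+1) (restr _ S (symm (pos0 k) (U x)))) =
      ∑ σ : MulAction.stabilizer (Equiv.Perm (Fin (2 * (k+1)))) (pos0 k),
      (Pi.single (evp (τ x)) (W (blk2 (k+1)) (oddp (β x) ∘ (σ.1⁻¹ : Equiv.Perm (Fin (2 * (k+1)))))) :
        (Fin (2 * (k+1)) → Fin (2 * (k+1) + 1)) → ℂ) (evp (τ x') ∘ σ.1) := by
    intro x' x
    rw [← psi_symm_unit (pos0 k) (W (blk2 (k+1))) (evp (τ x)) (oddp (β x)) (U x) (hU x)]
    change psi (W (blk2 (k+1))) (restr _ S (symm (pos0 k) (U x))) (evp (τ x')) = _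
    rw [psi_restr S (W (blk2 (k+1))) (W_odd _) _ (W_weight (blk2 (k+1))), if_pos]
    refine ⟨fun i => ⟨τ x' i, by simp only [evp]; omega⟩, ?_⟩
    have h := x'.2.2.2
    convert h using 1
    have hs := τsum x' (fun y => ((y : ℕ) : ℤ))
    have h3 : 2 * ∑ y : Fin (k+2), ((y : ℕ) : ℤ) = (k + 1) * (k + 2) := by
      rw [Fin.sum_univ_eq_sum_range (fun c => (c : ℤ))]
      have := Finset.sum_range_id_mul_two (k+2)
      zify at this
      rw [mul_comm, this, show k + 2 - 1 = k + 1 from rfl]; push_cast; ring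
    simp only [evp]
    push_cast
    rw [← Finset.mul_sum, hs]
    linear_combination 2 * h3
  refine rank_ge (Q S (pos0 k)) (Q_homog S (pos0 k)) (phi2 (k+1))
    (fun x => restr _ S (symm (pos0 k) (U x))) (fun x => proj_mem _ _ _) ?_
  refine linInd_diag _ (fun x => evl (1 : Equiv.Perm (Fin (2 * (k+1)))) (evp (τ x))) ?_ ?_
  · intro x' x h
    rw [hcoord] at h
    obtain ⟨σ, _, hσ⟩ := Finset.exists_ne_zero_of_sum_ne_zero h
    have h1 : evp (τ x') ∘ σ.1 = evp (τ x) := by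
      by_contra hne
      exact hσ (Pi.single_eq_of_ne hne _)
    rw [h1, Pi.single_eq_same] at hσ
    have h2 := evp_comp _ _ _ h1
    have hσ0 : σ.1 (pos0 k) = pos0 k := σ.2
    have hs : x'.1.2.2.2 = x.1.2.2.2 := by
      rw [← τs x', ← τs x, ← h2 (pos0 k), hσ0]
    have hF : ∀ F : Fin (k+2) → ℤ, F x.1.1 + F x.1.2.1 + F x.1.2.2.1 =
        F x'.1.1 + F x'.1.2.1 + F x'.1.2.2.1 := by
      intro F
      have a := τsum x F
      have b := τsum x' F
      have c : ∑ i, F (τ x i) = ∑ i, F (τ x' i) := by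
        rw [← Equiv.sum_comp σ.1 (fun i => F (τ x' i))]
        exact Finset.sum_congr rfl (fun i _ => by rw [h2])
      rw [hs] at b
      linarith
    have hp : x.1.1 = x.1.2.1 ∨ x'.1.1 = x.1.1 ∨ x'.1.1 = x.1.2.1 := by
      by_contra hcon
      push Not at hcon
      obtain ⟨c1, c2, c3⟩ := hcon
      obtain ⟨j, hj⟩ := Fin.exists_succAbove_eq c2.symm
      obtain ⟨j', hj'⟩ := Fin.exists_succAbove_eq c3.symm
      have hinv : ∀ i, i ≠ pos0 k → β x (σ.1⁻¹ i) = α x (τ x' i) := by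
        intro i hi
        have hne : σ.1⁻¹ i ≠ pos0 k := by
          intro hc
          rw [Equiv.Perm.inv_eq_iff_eq, hσ0] at hc
          exact hi hc
        rw [β1 x _ hne, ← h2]
        exact congrArg (fun z => α x (τ x' z)) (σ.1.apply_symm_apply i)
      have hinj := W_ne_inj (blk2 (k+1)) (fun a j => β x (σ.1⁻¹ (blk2 (k+1) (a, j)))) (by
        have e : oddp (β x) ∘ (σ.1⁻¹ : Equiv.Perm (Fin (2 * (k+1)))) = oddp (fun i => β x (σ.1⁻¹ i)) := rfl
        rw [e, oddp_eq] at hσ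
        exact hσ) 0
      have : j = j' := by
        apply hinj
        simp only
        rw [hinv _ (blkne _ _ (by simp)), hinv _ (blkne _ _ (by simp)), τ0, τ0, hj, hj', αpq]
      rw [this, hj'] at hj
      exact c1 hj.symm
    obtain ⟨d1, d2, d3⟩ := triple_lemma _ _ _ _ _ _ x.2.1 x.2.2.1 x'.2.1 x'.2.2.1 hF hp
    apply Subtype.ext
    exact Prod.ext d1 (Prod.ext d2 (Prod.ext d3 hs))
  · intro x
    rw [hcoord]
    have hterm : ∀ σ : MulAction.stabilizer (Equiv.Perm (Fin (2 * (k+1)))) (pos0 k),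
      (Pi.single (evp (τ x)) (W (blk2 (k+1)) (oddp (β x) ∘ (σ.1⁻¹ : Equiv.Perm (Fin (2 * (k+1)))))) :
        (Fin (2 * (k+1)) → Fin (2 * (k+1) + 1)) → ℂ) (evp (τ x) ∘ σ.1) =
        (if evp (τ x) ∘ σ.1 = evp (τ x) then 1 else 0) * W (blk2 (k+1)) (oddp (β x)) := by
      intro σ
      by_cases h1 : evp (τ x) ∘ σ.1 = evp (τ x)
      · rw [if_pos h1, h1, Pi.single_eq_same, one_mul]
        congr 1
        have h2 := evp_comp _ _ _ h1
        have hσ0 : σ.1 (pos0 k) = pos0 k := σ.2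
        have : ∀ i, β x (σ.1⁻¹ i) = β x i := by
          intro i
          by_cases hi : i = pos0 k
          · have : σ.1⁻¹ i = i := by rw [Equiv.Perm.inv_eq_iff_eq, hi, hσ0]
            rw [this]
          · have hne : σ.1⁻¹ i ≠ pos0 k := by
              intro hc
              rw [Equiv.Perm.inv_eq_iff_eq, hσ0] at hc
              exact hi hc
            rw [β1 x _ hne, β1 x _ hi, ← h2]
            exact congrArg (fun z => α x (τ x z)) (σ.1.apply_symm_apply i)
        funext i
        apply Fin.ext
        simp only [Function.comp_apply, oddp, this]
      · rw [if_neg h1, zero_mul, Pi.single_eq_of_ne h1]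
    rw [Finset.sum_congr rfl (fun σ _ => hterm σ), ← Finset.sum_mul]
    refine mul_ne_zero ?_ (hW x)
    rw [Finset.sum_boole, Nat.cast_ne_zero]
    refine Finset.card_ne_zero_of_mem (a := 1) ?_
    simp

lemma main_bound (k : ℕ) (S : ℤ → Prop) [DecidablePred S] :
    (2 * (2 * (k+1)) + 1) ^ (2 * (k+1)) + Fintype.card (Idx2 (k+1) S) ≤
      Module.finrank ℂ (MvPolynomial (Fin (2 * (k+1)) ⊕ Fin (2 * (k+1))) ℂ ⧸ diagIdeal (2 * (k+1))) +
      Fintype.card (Idx1 (2 * (k+1)) S) := by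
  obtain ⟨L1, h1⟩ := M1_lower (2 * (k+1))
  obtain ⟨L2, h2⟩ := M2_lower k S
  have a1 := h1 (L1 + L2) (by omega)
  have a2 := h2 (L1 + L2) (by omega)
  have a3 := M1_upper S (pos0 k) (L1 + L2)
  have a4 := count_aux (HH (Fin (2 * (k+1)) ⊕ Fin (2 * (k+1))))
    (fun m => Q S (pos0 k) ⊓ HH (Fin (2 * (k+1)) ⊕ Fin (2 * (k+1))) m) (phi1 (2 * (k+1))) (phi2 (k+1))
    (fun m => inf_le_right)
    (stab_lead S (pos0 k) (W (blk2 (k+1))) (W_odd _) _ (W_weight (blk2 (k+1)))) (L1 + L2)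
  have := quot_finite (n := 2 * (k+1))
  have a5 := quot_bound (diagIdeal (2 * (k+1)))
    (fun m => lead (HH (Fin (2 * (k+1)) ⊕ Fin (2 * (k+1)))) (phi1 (2 * (k+1))) m ⊓
      lead (HH (Fin (2 * (k+1)) ⊕ Fin (2 * (k+1)))) (phi2 (k+1)) m)
    (fun m => inf_le_left.trans inf_le_left)
    (fun f hf m => ⟨diag_inLead ⟨2 * (k+1), rfl⟩ _ (W_odd (blk1 (2 * (k+1)))) (W_rigid _) _ f hf m,
      diag_inLead ⟨k+1, rfl⟩ _ (W_odd (blk2 (k+1))) (W_rigid _) id f hf m⟩) (L1 + L2)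
  simp only [HH] at a1 a2 a3 a4 a5 ⊢
  omega

end M2
end DC

namespace DC

lemma sum_lt {N : ℕ} (x : Fin N) : (∑ y : Fin N, if x < y then 1 else 0) = N - 1 - (x : ℕ) := by
  rw [← Finset.card_filter, ← Fin.card_Ioi]
  congr 1
  ext y; simp

lemma sum_le {N : ℕ} (x : Fin N) : (∑ y : Fin N, if x ≤ y then 1 else 0) = N - (x : ℕ) := by
  rw [← Finset.card_filter, ← Fin.card_Ici]
  congr 1
  ext y; simp

lemma card1 (n : ℕ) : 2 * Fintype.card (Idx1 n (fun _ => True)) = (n + 1) * ((n + 1) * n) := by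
  have h : Fintype.card (Idx1 n (fun _ => True)) = (n + 1) * ∑ j ∈ Finset.range (n + 1), j := by
    rw [Fintype.card_subtype, Finset.card_filter]
    refine (Finset.sum_congr rfl (g := fun x => if x.1 < x.2.1 then 1 else 0) (fun x _ => by simp)).trans ?_
    have e0 : ∑ x : Fin (n+1) × Fin (n+1) × Fin (n+1), (if x.1 < x.2.1 then 1 else 0) =
        ∑ x : Fin (n+1), ∑ y : Fin (n+1), ∑ _z : Fin (n+1), if x < y then 1 else 0 := by
      rw [Fintype.sum_prod_type]
      exact Finset.sum_congr rfl (fun x _ => Fintype.sum_prod_type _)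
    rw [e0]
    simp only [Finset.sum_const, Finset.card_univ, Fintype.card_fin, smul_eq_mul]
    simp only [← Finset.mul_sum, sum_lt]
    congr 1
    rw [Fin.sum_univ_eq_sum_range (fun c => n + 1 - 1 - c), Finset.sum_range_reflect (fun j => j)]
  rw [h, mul_left_comm, mul_comm 2, Finset.sum_range_id_mul_two]
  rfl

lemma sum_tri (k : ℕ) : 3 * ∑ j ∈ Finset.range (k + 1), j * (j + 1) = k * (k + 1) * (k + 2) := by
  induction k with
  | zero => simp
  | succ k ih => rw [Finset.sum_range_succ, mul_add, ih]; ring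

lemma card2 (k : ℕ) : 3 * Fintype.card (Idx2 k (fun _ => True)) = (k + 1) * (k * (k + 1) * (k + 2)) := by
  have h : Fintype.card (Idx2 k (fun _ => True)) = (k + 1) * ∑ j ∈ Finset.range (k + 1), j * (j + 1) := by
    rw [Fintype.card_subtype, Finset.card_filter]
    refine (Finset.sum_congr rfl (g := fun x => if x.2.1 < x.2.2.1 ∧ x.2.1 ≤ x.1 then 1 else 0) (fun x _ => by simp)).trans ?_
    have e0 : ∑ x : Fin (k+1) × Fin (k+1) × Fin (k+1) × Fin (k+1),
          (if x.2.1 < x.2.2.1 ∧ x.2.1 ≤ x.1 then 1 else 0) =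
        ∑ p : Fin (k+1), ∑ q : Fin (k+1), ∑ r : Fin (k+1), ∑ _s : Fin (k+1),
          if q < r ∧ q ≤ p then 1 else 0 := by
      rw [Fintype.sum_prod_type]
      refine Finset.sum_congr rfl (fun p _ => ?_)
      rw [Fintype.sum_prod_type]
      exact Finset.sum_congr rfl (fun q _ => Fintype.sum_prod_type _)
    rw [e0]
    simp only [Finset.sum_const, Finset.card_univ, Fintype.card_fin, smul_eq_mul]
    rw [Finset.sum_comm]
    simp only [← Finset.mul_sum]
    congr 1
    have e : ∀ q : Fin (k+1), (∑ p : Fin (k+1), ∑ r : Fin (k+1), if q < r ∧ q ≤ p then 1 else 0) =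
        (k + 1 - 1 - (q : ℕ)) * ((k + 1 - 1 - (q : ℕ)) + 1) := by
      intro q
      have e1 : ∀ p r : Fin (k+1), (if q < r ∧ q ≤ p then 1 else 0) =
          (if q ≤ p then 1 else 0) * (if q < r then 1 else 0) := by
        intro p r; split_ifs <;> simp_all
      simp only [e1, ← Finset.mul_sum, ← Finset.sum_mul, sum_lt, sum_le]
      rw [mul_comm]
      congr 1
      have := q.isLt
      omega
    rw [Finset.sum_congr rfl (fun q _ => e q),
      Fin.sum_univ_eq_sum_range (fun c => (k + 1 - 1 - c) * (k + 1 - 1 - c + 1)),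
      Finset.sum_range_reflect (fun j => j * (j + 1))]
  rw [h, mul_left_comm, sum_tri]

abbrev S3 (z : ℤ) : Prop := z = -2 ∨ z = 0 ∨ z = 2

lemma cnt (k N t : ℕ) (z : ℕ → ℤ) (hz : ∀ s, z s = 2 * (k : ℤ) - 2 * t + 2 * s) :
    (∑ s : Fin N, if S3 (z s) then 1 else 0) = min (t + 2 - k) N - (t - k - 1) := by
  rw [Fin.sum_univ_eq_sum_range (fun s => if S3 (z s) then 1 else 0), ← Finset.card_filter,
    ← Nat.card_Ico]
  congr 1
  ext s
  simp only [Finset.mem_filter, Finset.mem_range, Finset.mem_Ico, S3, hz, lt_min_iff]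
  omega

lemma sum_ite_and {N : ℕ} (P : Prop) [Decidable P] (z : Fin N → ℤ) :
    (∑ s : Fin N, if P ∧ S3 (z s) then 1 else 0) =
      if P then (∑ s : Fin N, if S3 (z s) then 1 else 0) else 0 := by
  by_cases h : P <;> simp [h]

/-- counting function for the first index set -/
def c1 (k : ℕ) : ℕ := ∑ p ∈ Finset.range (2 * k + 1), ∑ q ∈ Finset.range (2 * k + 1),
  if p < q then min (p + q + 2 - k) (2 * k + 1) - (p + q - k - 1) else 0

/-- counting function for the second index set -/
def c2 (k : ℕ) : ℕ := ∑ p ∈ Finset.range (k + 1), ∑ q ∈ Finset.range (k + 1), ∑ r ∈ Finset.range (k + 1),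
  if q < r ∧ q ≤ p then min (p + q + r + 2 - k) (k + 1) - (p + q + r - k - 1) else 0

lemma card_c1 (k : ℕ) : Fintype.card (Idx1 (2 * k) S3) = c1 k := by
  rw [Fintype.card_subtype, Finset.card_filter, Fintype.sum_prod_type, c1,
    ← Fin.sum_univ_eq_sum_range (fun p => ∑ q ∈ Finset.range (2 * k + 1),
      if p < q then min (p + q + 2 - k) (2 * k + 1) - (p + q - k - 1) else 0)]
  refine Finset.sum_congr rfl (fun p _ => ?_)
  rw [Fintype.sum_prod_type, ← Fin.sum_univ_eq_sum_range (fun q =>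
      if (p : ℕ) < q then min (p + q + 2 - k) (2 * k + 1) - (p + q - k - 1) else 0)]
  refine Finset.sum_congr rfl (fun q _ => ?_)
  refine (sum_ite_and (p < q) (fun s => _)).trans ?_
  refine if_congr Iff.rfl ?_ rfl
  refine cnt k _ (p + q) (fun s => ((2 * k : ℕ) : ℤ) - 2 * (p : ℕ) - 2 * (q : ℕ) + 2 * (s : ℕ)) ?_
  intro s
  push_cast
  ring

lemma card_c2 (k : ℕ) : Fintype.card (Idx2 k S3) = c2 k := by
  rw [Fintype.card_subtype, Finset.card_filter, Fintype.sum_prod_type, c2,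
    ← Fin.sum_univ_eq_sum_range (fun p => ∑ q ∈ Finset.range (k + 1), ∑ r ∈ Finset.range (k + 1),
      if q < r ∧ q ≤ p then min (p + q + r + 2 - k) (k + 1) - (p + q + r - k - 1) else 0)]
  refine Finset.sum_congr rfl (fun p _ => ?_)
  rw [Fintype.sum_prod_type, ← Fin.sum_univ_eq_sum_range (fun q => ∑ r ∈ Finset.range (k + 1),
      if q < r ∧ q ≤ p then min (p + q + r + 2 - k) (k + 1) - (p + q + r - k - 1) else 0)]
  refine Finset.sum_congr rfl (fun q _ => ?_)
  rw [Fintype.sum_prod_type, ← Fin.sum_univ_eq_sum_range (fun r =>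
      if (q : ℕ) < r ∧ (q : ℕ) ≤ p then min (p + q + r + 2 - k) (k + 1) - (p + q + r - k - 1) else 0)]
  refine Finset.sum_congr rfl (fun r _ => ?_)
  have h := sum_ite_and (q < r ∧ q ≤ p)
    (fun s : Fin (k+1) => 2 * (k : ℤ) - 2 * ((p : ℕ) + (q : ℕ) + (r : ℕ)) + 2 * (s : ℕ))
  simp only [and_assoc] at h
  refine h.trans ?_
  refine if_congr Iff.rfl ?_ rfl
  refine cnt k _ (p + q + r) (fun s => 2 * (k : ℤ) - 2 * ((p : ℕ) + (q : ℕ) + (r : ℕ)) + 2 * (s : ℕ)) ?_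
  intro s
  push_cast
  ring

lemma small5 : Fintype.card (Idx1 (2 * 5) S3) + 10 ≤ Fintype.card (Idx2 5 S3) := by
  rw [card_c1, card_c2]; decide +kernel

lemma small7 : Fintype.card (Idx1 (2 * 7) S3) + 28 ≤ Fintype.card (Idx2 7 S3) := by
  rw [card_c1, card_c2]; decide +kernel

lemma small9 : Fintype.card (Idx1 (2 * 9) S3) + 54 ≤ Fintype.card (Idx2 9 S3) := by
  rw [card_c1, card_c2]; decide +kernel

lemma final_bound (k : ℕ) (hk : k % 2 = 0) :
    (2 * (2 * ((k : ℤ) + 1)) + 1) ^ (2 * (k+1)) + ((k : ℤ) + 1) * ((k : ℤ) - 2) ≤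
      (Module.finrank ℂ (MvPolynomial (Fin (2 * (k+1)) ⊕ Fin (2 * (k+1))) ℂ ⧸ diagIdeal (2 * (k+1))) : ℤ) := by
  have gen : ∀ (S : ℤ → Prop) [DecidablePred S], ((k : ℤ) + 1) * ((k : ℤ) - 2) +
      Fintype.card (Idx1 (2 * (k+1)) S) ≤ Fintype.card (Idx2 (k+1) S) →
      (2 * (2 * ((k : ℤ) + 1)) + 1) ^ (2 * (k+1)) + ((k : ℤ) + 1) * ((k : ℤ) - 2) ≤
      (Module.finrank ℂ (MvPolynomial (Fin (2 * (k+1)) ⊕ Fin (2 * (k+1))) ℂ ⧸ diagIdeal (2 * (k+1))) : ℤ) := by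
    intro S _ h
    have := main_bound k S
    zify at this
    linarith
  by_cases hbig : 10 ≤ k
  · refine gen (fun _ => True) ?_
    have h1 := card1 (2 * (k+1))
    have h2 := card2 (k+1)
    generalize Fintype.card (Idx1 (2 * (k+1)) (fun _ => True)) = a at *
    generalize Fintype.card (Idx2 (k+1) (fun _ => True)) = b at *
    obtain ⟨m, rfl⟩ := Nat.exists_eq_add_of_le hbig
    zify at h1 h2
    push_cast at *
    have hm : (0 : ℤ) ≤ m := by positivity
    have : (0:ℤ) ≤ 3 * (b - a - (10 + m + 1) * (10 + m - 2)) := by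
      have e : (3:ℤ) * (b - a - (10 + m + 1) * (10 + m - 2)) = (11 + m) * (m^3 + 25 * m ^ 2 + 177 * m + 261) := by
        have h3 : (a : ℤ) = (11 + m) * (2 * m + 23) ^ 2 := by linarith
        linear_combination h2 - 3 * h3
      rw [e]
      positivity
    linarith
  · have : k = 0 ∨ k = 2 ∨ k = 4 ∨ k = 6 ∨ k = 8 := by omega
    rcases this with rfl | rfl | rfl | rfl | rfl
    · refine gen (fun _ => False) ?_
      have : IsEmpty (Idx1 (2 * (0+1)) (fun _ => False)) := ⟨fun x => x.2.2⟩
      simp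
    · refine gen (fun _ => False) ?_
      have : IsEmpty (Idx1 (2 * (2+1)) (fun _ => False)) := ⟨fun x => x.2.2⟩
      simp
    · refine gen S3 ?_
      have := small5
      zify at this
      norm_num at this ⊢
      linarith
    · refine gen S3 ?_
      have := small7
      zify at this
      norm_num at this ⊢
      linarith
    · refine gen S3 ?_
      have := small9
      zify at this
      norm_num at this ⊢
      linarith

end DC

/-- If `n` is a positive integer congruent to 2 mod 4, then
`dim_ℂ R_W ≥ (2n+1)^n + n(n-6)/4` for the diagonal coinvariant ring of `W(Bₙ)`. -/
theorem dim_diag_coinv_ge_of_mod_four_eq_two (n : ℕ) (hn : 0 < n) (h2 : n % 4 = 2) :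
    ((2 * n + 1 : ℤ)) ^ n + (n : ℤ) * ((n : ℤ) - 6) / 4 ≤
      (Module.finrank ℂ (MvPolynomial (Fin n ⊕ Fin n) ℂ ⧸ diagIdeal n) : ℤ) := by
  obtain ⟨k, rfl⟩ : ∃ k, n = 2 * (k + 1) := ⟨n / 2 - 1, by omega⟩
  have h := DC.final_bound k (by omega)
  have e : ((2 * (k + 1) : ℕ) : ℤ) * (((2 * (k + 1) : ℕ) : ℤ) - 6) / 4 = ((k : ℤ) + 1) * ((k : ℤ) - 2) := by
    rw [show ((2 * (k + 1) : ℕ) : ℤ) * (((2 * (k + 1) : ℕ) : ℤ) - 6) = 4 * (((k : ℤ) + 1) * ((k : ℤ) - 2)) by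
      push_cast; ring]
    exact Int.mul_ediv_cancel_left _ (by norm_num)
  rw [e]
  push_cast
  exact h
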